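/- arXiv:2512.01900 — 5 statements merged into one kernel-verified Lean document; each statement's English description precedes it below -/
import Mathlib

section
/- Let F be an extended k-labeled forest and d = (H₀, J, L) an extension datum, and suppose the glueing H = Glue(F; d) contains a cycle. Then H contains a simple cycle C' such that (i) for every connected component D of F, the vertices of D lying on C' occur as a (possibly empty) contiguous segment of C', and (ii) for every vector v ∈ {0,1,2}^{{0,…,k}}, at most two connected components D of F with labv(D) = v contain a vertex of C'. -/
/-- A `k`-labeled graph: a finite simple graph whose vertices are labeled with
labels in `{0, 1, …, k}`. -/
structure LGraph (k : ℕ) where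
  V : Type
  fintype : Fintype V
  G : SimpleGraph V
  lab : V → Fin (k + 1)

/-- An extension datum `d = (H₀, J, L)`: a finite simple forest `H₀` on a vertex set `W`,
a symmetric irreflexive relation `J` on the labels `{1, …, k}`, and a map assigning to each
vertex of `W` a set of labels in `{1, …, k}`. -/
structure ExtDatum (k : ℕ) where
  W : Type
  finW : Finite W
  H0 : SimpleGraph W
  H0acyc : H0.IsAcyclic
  J : Fin (k + 1) → Fin (k + 1) → Prop
  Jsymm : ∀ i j, J i j → J j i
  Jirrefl : ∀ i, ¬ J i i
  Jpos : ∀ i j, J i j → i ≠ 0 ∧ j ≠ 0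
  L : W → Set (Fin (k + 1))
  Lpos : ∀ w, (0 : Fin (k + 1)) ∉ L w

/-- The glueing `Glue(F; d)` of a labeled graph `F` with an extension datum `d`. -/
def glue {k : ℕ} (F : LGraph k) (d : ExtDatum k) : SimpleGraph (F.V ⊕ d.W) :=
  SimpleGraph.fromRel fun x y =>
    match x, y with
    | Sum.inl u, Sum.inl v => F.G.Adj u v ∨ d.J (F.lab u) (F.lab v)
    | Sum.inl u, Sum.inr w => F.lab u ∈ d.L w
    | Sum.inr w, Sum.inr w' => d.H0.Adj w w'
    | _, _ => False

/-- The type `labv(D)` of a set of vertices: the number of vertices of each label, capped at 2. -/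
noncomputable def labv {k : ℕ} (F : LGraph k) (D : Set F.V) : Fin (k + 1) → ℕ :=
  fun j => min 2 (Set.ncard {v | v ∈ D ∧ F.lab v = j})

namespace CycStr

open Classical in
/-- number of consecutive pairs of a list that are not related by `E` -/
noncomputable def wt {α : Type*} (E : α → α → Prop) : List α → ℕ
  | [] => 0
  | [_] => 0
  | a :: b :: l => (if E a b then 0 else 1) + wt E (b :: l)

theorem wt_split {α : Type*} (E : α → α → Prop) (l₁ : List α) (c : α) (l₂ : List α) :
    wt E (l₁ ++ c :: l₂) = wt E (l₁ ++ [c]) + wt E (c :: l₂) := by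
  induction l₁ with
  | nil => simp [wt]
  | cons a t ih =>
    cases t with
    | nil => simp [wt]
    | cons b t => simp only [List.cons_append, wt] at ih ⊢; omega

theorem wt_chain {α : Type*} (E : α → α → Prop) (l : List α) (h : l.IsChain E) :
    wt E l = 0 := by
  induction l with
  | nil => simp [wt]
  | cons a t ih =>
    cases t with
    | nil => simp [wt]
    | cons b t =>
      rw [List.isChain_cons_cons] at h
      simp [wt, h.1, ih h.2]

theorem wt_pos {α : Type*} (E : α → α → Prop) (D : α → Prop)
    (hDE : ∀ x y, E x y → D x → D y) (u : α) (l : List α) (hu : D u)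
    (h : ∃ w ∈ l, ¬ D w) : 0 < wt E (u :: l) := by
  induction l generalizing u with
  | nil => simp at h
  | cons b t ih =>
    by_cases hb : E u b
    · have hDb := hDE _ _ hb hu
      obtain ⟨w, hw, hwD⟩ := h
      have := ih b hDb ⟨w, by
        rcases List.mem_cons.1 hw with rfl | hw
        · exact absurd hDb hwD
        · exact hw, hwD⟩
      simp only [wt]; omega
    · simp [wt, hb]

theorem wt_single_le {α : Type*} (E : α → α → Prop) (a b : α) : wt E [a, b] ≤ 1 := by
  simp only [wt]; split <;> omega

theorem chain_D {α : Type*} (E : α → α → Prop) (D : α → Prop)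
    (hDE : ∀ x y, E x y → D x → D y) (u : α) (l : List α) (hu : D u)
    (h : (u :: l).IsChain E) : ∀ z ∈ l, D z := by
  induction l generalizing u with
  | nil => simp
  | cons b t ih =>
    rw [List.isChain_cons_cons] at h
    have hb := hDE _ _ h.1 hu
    intro z hz
    rcases List.mem_cons.1 hz with rfl | hz
    · exact hb
    · exact ih b hb h.2 z hz

/-- the list is (the vertex sequence of) a cycle -/
def Cyc {α : Type*} (R : α → α → Prop) (l : List α) : Prop :=
  l.Nodup ∧ 3 ≤ l.length ∧ (l ++ l.take 1).IsChain R

/-- the closed weight -/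
noncomputable def cw {α : Type*} (E : α → α → Prop) (l : List α) : ℕ := wt E (l ++ l.take 1)

theorem Cyc.rot1 {α : Type*} {R : α → α → Prop} {a : α} {l : List α} (h : Cyc R (a :: l)) :
    Cyc R (l ++ [a]) := by
  obtain ⟨h1, h2, h3⟩ := h
  refine ⟨by rw [← List.nodup_rotate (n := 1)] at h1; simpa using h1, by simpa using h2, ?_⟩
  cases l with
  | nil => simp at h2
  | cons b t =>
    simp only [List.take_succ_cons, List.take_zero, List.cons_append, List.append_assoc,
      List.nil_append] at h3 ⊢
    rw [List.isChain_cons_cons] at h3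
    rw [← List.cons_append, List.isChain_split]
    exact ⟨h3.2, by simpa using h3.1⟩

theorem cw_rot1 {α : Type*} (E : α → α → Prop) (a : α) (l : List α) :
    cw E (l ++ [a]) = cw E (a :: l) := by
  cases l with
  | nil => simp [cw]
  | cons b t =>
    simp only [cw, List.take_succ_cons, List.take_zero, List.cons_append, List.append_assoc,
      List.nil_append]
    rw [← List.cons_append, wt_split]
    simp only [wt, List.cons_append]
    omega

/-- a cycle of least weight -/
def Min {α : Type*} (R E : α → α → Prop) (l : List α) : Prop :=
  Cyc R l ∧ ∀ l', Cyc R l' → cw E l ≤ cw E l'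

theorem Min.rot1 {α : Type*} {R E : α → α → Prop} {a : α} {l : List α} (h : Min R E (a :: l)) :
    Min R E (l ++ [a]) := ⟨h.1.rot1, fun l' hl' => by rw [cw_rot1]; exact h.2 l' hl'⟩

theorem Min.rot {α : Type*} {R E : α → α → Prop} (l₁ l₂ : List α) (h : Min R E (l₁ ++ l₂)) :
    Min R E (l₂ ++ l₁) := by
  induction l₁ generalizing l₂ with
  | nil => simpa using h
  | cons a t ih =>
    have := ih (l₂ ++ [a]) (by simpa using h.rot1)
    simpa using this

theorem Min.isRotated {α : Type*} {R E : α → α → Prop} {l l' : List α} (h : Min R E l)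
    (hr : l ~r l') : Min R E l' := by
  obtain ⟨n, hn, rfl⟩ := List.isRotated_iff_mod.1 hr
  rw [List.rotate_eq_drop_append_take hn]
  apply Min.rot
  simpa using h

theorem no_bad {α : Type*} {R E : α → α → Prop} (hER : ∀ x y, E x y → R x y) (D : α → Prop)
    (hDE : ∀ x y, E x y → D x → D y) : ∀ (n : ℕ) (u v : α) (M B B' : List α), M.length ≤ n →
    (u :: (M ++ [v])).IsChain E → (u :: (M ++ [v])).Nodup → Min R E (u :: (B ++ v :: B')) →
    D u → D v → (∃ w ∈ B, ¬ D w) → (∃ w ∈ B', ¬ D w) → False := by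
  intro n
  induction n with
  | zero => ?_
  | succ n ih => ?_
  all_goals
    intro u v M B B' hn hch hnd hm hu hv hB hB'
    by_cases hz : ∃ z ∈ M, z ∈ B ∨ z ∈ B'
  · obtain ⟨z, hz, -⟩ := hz
    have : M = [] := List.length_eq_zero_iff.1 (by omega)
    simp [this] at hz
  rotate_left
  · obtain ⟨z, hzM, hz⟩ := hz
    have hzD : D z := chain_D E D hDE u _ hu hch z (by simp [hzM])
    obtain ⟨M1, M2, rfl⟩ := List.append_of_mem hzM
    have c1 : (u :: (M1 ++ [z])).IsChain E := by
      have : (u :: (M1 ++ [z]) ++ (M2 ++ [v])).IsChain E := by simpa using hch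
      exact this.left_of_append
    have c2 : (z :: (M2 ++ [v])).IsChain E := by
      have : (u :: M1 ++ (z :: (M2 ++ [v]))).IsChain E := by simpa using hch
      exact this.right_of_append
    have n1 : (u :: (M1 ++ [z])).Nodup := by
      have : (u :: (M1 ++ [z]) ++ (M2 ++ [v])).Nodup := by simpa using hnd
      exact this.of_append_left
    have n2 : (z :: (M2 ++ [v])).Nodup := by
      have : (u :: M1 ++ (z :: (M2 ++ [v]))).Nodup := by simpa using hnd
      exact this.of_append_right
    have l1 : M1.length ≤ n := by simp at hn; omega
    have l2 : M2.length ≤ n := by simp at hn; omega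
    rcases hz with hz | hz
    · obtain ⟨B1, B2, rfl⟩ := List.append_of_mem hz
      obtain ⟨w, hw, hwD⟩ := hB
      have hw' : w ∈ B1 ∨ w ∈ B2 := by
        simp only [List.mem_append, List.mem_cons] at hw
        rcases hw with hw | rfl | hw
        · exact Or.inl hw
        · exact absurd hzD hwD
        · exact Or.inr hw
      rcases hw' with hw | hw
      · refine ih u z M1 B1 (B2 ++ v :: B') l1 c1 n1 (by simpa using hm) hu hzD ⟨w, hw, hwD⟩ ?_
        obtain ⟨w', h1, h2⟩ := hB'
        exact ⟨w', by simp [h1], h2⟩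
      · refine ih z v M2 B2 (B' ++ u :: B1) l2 c2 n2 ?_ hzD hv ⟨w, hw, hwD⟩ ?_
        · have := Min.rot (u :: B1) (z :: (B2 ++ v :: B')) (by simpa using hm)
          simpa using this
        obtain ⟨w', h1, h2⟩ := hB'
        exact ⟨w', by simp [h1], h2⟩
    · obtain ⟨B1, B2, rfl⟩ := List.append_of_mem hz
      obtain ⟨w, hw, hwD⟩ := hB'
      have hw' : w ∈ B1 ∨ w ∈ B2 := by
        simp only [List.mem_append, List.mem_cons] at hw
        rcases hw with hw | rfl | hw
        · exact Or.inl hw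
        · exact absurd hzD hwD
        · exact Or.inr hw
      rcases hw' with hw | hw
      · refine ih z v M2 (B2 ++ u :: B) B1 l2 c2 n2 ?_ hzD hv ?_ ⟨w, hw, hwD⟩
        · have := Min.rot (u :: (B ++ v :: B1)) (z :: B2) (by simpa using hm)
          simpa using this
        obtain ⟨w', h1, h2⟩ := hB
        exact ⟨w', by simp [h1], h2⟩
      · refine ih u z M1 (B ++ v :: B1) B2 l1 c1 n1 (by simpa using hm) hu hzD ?_ ⟨w, hw, hwD⟩
        obtain ⟨w', h1, h2⟩ := hB
        exact ⟨w', by simp [h1], h2⟩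
  all_goals
    have hcn := hm.1.1
    have hcc := hm.1.2.2
    simp only [List.take_succ_cons, List.take_zero, List.cons_append, List.append_assoc] at hcc
    have hcc2 := List.IsChain.right_of_append (l₁ := u :: B) hcc
    have key : Cyc R (u :: (M ++ v :: B')) := by
      refine ⟨?_, ?_, ?_⟩
      · push Not at hz
        clear hm hcc hcc2
        simp only [List.nodup_cons, List.nodup_append, List.mem_append, List.mem_cons] at hcn hnd ⊢
        grind
      · obtain ⟨w, hw, -⟩ := hB'
        have := List.length_pos_of_mem hw
        simp; omega
      · simp only [List.take_succ_cons, List.take_zero, List.cons_append, List.append_assoc]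
        rw [← List.cons_append, List.isChain_split]
        exact ⟨(hch.imp (fun x y => hER x y)), hcc2⟩
    have h1 := hm.2 _ key
    simp only [cw, List.take_succ_cons, List.take_zero, List.cons_append, List.append_assoc] at h1
    rw [← List.cons_append, wt_split, ← List.cons_append (as := M), wt_split E (u :: M),
      List.cons_append (as := M), wt_chain E _ hch] at h1
    have : 0 < wt E (u :: (B ++ [v])) := by
      apply wt_pos E D hDE u _ hu
      obtain ⟨w', h1, h2⟩ := hB
      exact ⟨w', by simp [h1], h2⟩
    simp only [List.cons_append] at h1 this
    omega

/-- any two points of `D` joined by an `E`-path -/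
def Conn {α : Type*} (E : α → α → Prop) (D : α → Prop) : Prop :=
  ∀ u v, D u → D v → u ≠ v → ∃ M : List α, (u :: (M ++ [v])).IsChain E ∧ (u :: (M ++ [v])).Nodup

theorem no_bad' {α : Type*} {R E : α → α → Prop} (hER : ∀ x y, E x y → R x y) (D : α → Prop)
    (hDE : ∀ x y, E x y → D x → D y) (hC : Conn E D) (u v : α) (B B' : List α)
    (hm : Min R E (u :: (B ++ v :: B'))) (hu : D u) (hv : D v)
    (hB : ∃ w ∈ B, ¬ D w) (hB' : ∃ w ∈ B', ¬ D w) : False := by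
  have hne : u ≠ v := by
    have := hm.1.1
    rintro rfl
    simp at this
  obtain ⟨M, h1, h2⟩ := hC u v hu hv hne
  exact no_bad hER D hDE _ u v M B B' le_rfl h1 h2 hm hu hv hB hB'

theorem split_first {α : Type*} (D : α → Prop) (l : List α) (h : ∃ u ∈ l, D u) :
    ∃ N u T, l = N ++ u :: T ∧ D u ∧ ∀ y ∈ N, ¬ D y := by
  induction l with
  | nil => simp at h
  | cons a t ih =>
    by_cases ha : D a
    · exact ⟨[], a, t, rfl, ha, by simp⟩
    · obtain ⟨u, hu, huD⟩ := h
      obtain ⟨N, u, T, rfl, h1, h2⟩ := ih ⟨u, by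
        rcases List.mem_cons.1 hu with rfl | hu
        · exact absurd huD ha
        · exact hu, huD⟩
      exact ⟨a :: N, u, T, rfl, h1, by simpa [ha] using h2⟩

theorem split_last {α : Type*} (D : α → Prop) (l : List α) (h : ∃ u ∈ l, D u) :
    ∃ N u T, l = N ++ u :: T ∧ D u ∧ ∀ y ∈ T, ¬ D y := by
  obtain ⟨N, u, T, h1, h2, h3⟩ := split_first D l.reverse (by simpa using h)
  refine ⟨T.reverse, u, N.reverse, ?_, h2, by simpa using h3⟩
  rw [← List.reverse_reverse l, h1]; simp

theorem contig {α : Type*} {R E : α → α → Prop} (hER : ∀ x y, E x y → R x y) (D : α → Prop)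
    (hDE : ∀ x y, E x y → D x → D y) (hC : Conn E D) (l : List α) (hm : Min R E l) :
    ∃ l₁ l₂, l ~r (l₁ ++ l₂) ∧ (∀ y ∈ l₁, D y) ∧ (∀ y ∈ l₂, ¬ D y) := by
  by_cases h1 : ∃ w ∈ l, ¬ D w
  swap
  · push Not at h1
    exact ⟨l, [], by rw [List.append_nil], h1, by simp⟩
  by_cases h2 : ∃ w ∈ l, D w
  swap
  · push Not at h2
    exact ⟨[], l, by rw [List.nil_append], by simp, h2⟩
  obtain ⟨w, hw, hwD⟩ := h1
  obtain ⟨X, Y, rfl⟩ := List.append_of_mem hw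
  have hr : (X ++ w :: Y) ~r (w :: (Y ++ X)) := by
    simpa using (List.isRotated_append (l := X) (l' := w :: Y))
  obtain ⟨N, u, T, hl, hu, hN⟩ := split_first D (Y ++ X) (by
    obtain ⟨u, hu, huD⟩ := h2
    refine ⟨u, ?_, huD⟩
    simp only [List.mem_append, List.mem_cons] at hu ⊢
    rcases hu with hu | rfl | hu
    · exact Or.inr hu
    · exact absurd huD hwD
    · exact Or.inl hu)
  rw [hl] at hr
  have hr2 : (X ++ w :: Y) ~r (u :: (T ++ w :: N)) := by
    refine hr.trans ?_
    simpa using (List.isRotated_append (l := w :: N) (l' := u :: T))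
  by_cases hT : ∃ y ∈ T, ¬ D y
  swap
  · push Not at hT
    refine ⟨u :: T, w :: N, by simpa using hr2, ?_, ?_⟩
    · simpa [hu] using hT
    · simpa [hwD] using hN
  obtain ⟨A, y, T', rfl, hy, hA⟩ := split_first (fun z => ¬ D z) T hT
  refine ⟨u :: A, y :: (T' ++ w :: N), by simpa using hr2, ?_, ?_⟩
  · simp only [not_not] at hA
    simpa [hu] using hA
  intro v hv hvD
  simp only [List.mem_cons, List.mem_append] at hv
  rcases hv with rfl | hv | rfl | hv
  · exact hy hvD
  · obtain ⟨B, B', rfl⟩ := List.append_of_mem hv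
    refine no_bad' hER D hDE hC u v (A ++ y :: B) (B' ++ w :: N) ?_ hu hvD
      ⟨y, by simp, hy⟩ ⟨w, by simp, hwD⟩
    simpa using hm.isRotated hr2
  · exact hwD hvD
  · exact hN _ hv hvD

/-- merging two components -/
theorem merge {α : Type*} {R E : α → α → Prop} (hER : ∀ x y, E x y → R x y)
    (D₁ D₂ : α → Prop) (hDE₁ : ∀ x y, E x y → D₁ x → D₁ y) (hC : Conn E D₁)
    (hDE₂ : ∀ x y, E x y → D₂ x → D₂ y)
    (hdisj : ∀ x, D₁ x → ¬ D₂ x) (a b : α) (Y Q : List α) (hm : Min R E (a :: (Y ++ b :: Q)))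
    (ha : D₁ a) (hb : D₂ b) (hQ₁ : ∀ y ∈ Q, ¬ D₁ y) (hQ₂ : ∀ y ∈ Q, ¬ D₂ y)
    (x : α) (hx : D₁ x) (hxq : ∀ q, R b q → ¬ E b q → x ≠ q → R x q)
    (hlen : 2 ≤ Q.length ∨ (1 ≤ Q.length ∧ x ≠ a)) : False := by
  have hP : ∃ P' : List α, (a :: P').IsChain E ∧ (a :: P').Nodup ∧
      ∃ P'', a :: P' = P'' ++ [x] ∧ (x ≠ a → 1 ≤ P'.length) := by
    by_cases hxa : x = a
    · exact ⟨[], by simp, by simp, [], by simp [hxa], by simp [hxa]⟩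
    · obtain ⟨M, h1, h2⟩ := hC a x ha hx (Ne.symm hxa)
      exact ⟨M ++ [x], h1, h2, a :: M, by simp, by simp⟩
  obtain ⟨P', hPc, hPn, P'', hPx, hPl⟩ := hP
  cases Q with
  | nil => simp at hlen
  | cons q Q =>
  have hPD := chain_D E D₁ hDE₁ a _ ha hPc
  have hcn := hm.1.1
  have hcc := hm.1.2.2
  simp only [List.take_succ_cons, List.take_zero, List.cons_append, List.append_assoc] at hcc
  have hcc2 := List.IsChain.right_of_append (l₁ := a :: Y) hcc
  rw [List.isChain_cons_cons] at hcc2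
  have hbq : ¬ E b q := fun h => hQ₂ q (by simp) (hDE₂ _ _ h hb)
  have hxq' : R x q := hxq q hcc2.1 hbq (by rintro rfl; exact hQ₁ x (by simp) hx)
  have key : Cyc R (a :: (P' ++ q :: Q)) := by
    refine ⟨?_, ?_, ?_⟩
    · have hQn : (q :: Q).Nodup := (List.nodup_cons.1
        (List.Nodup.of_append_right (l₁ := a :: Y) (l₂ := b :: q :: Q) (by simpa using hcn))).2
      rw [← List.cons_append, List.nodup_append']
      refine ⟨hPn, hQn, ?_⟩
      intro z hz hz'
      rcases List.mem_cons.1 hz with rfl | hz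
      · exact hQ₁ _ hz' ha
      · exact hQ₁ _ hz' (hPD z hz)
    · simp at hlen ⊢
      by_cases hxa : x = a
      · simp [hxa] at hlen; omega
      · have := hPl hxa; omega
    · simp only [List.take_succ_cons, List.take_zero, List.cons_append, List.append_assoc]
      rw [← List.cons_append, List.isChain_split]
      refine ⟨?_, hcc2.2⟩
      rw [hPx, List.append_assoc, List.singleton_append, List.isChain_split, ← hPx]
      exact ⟨(hPc.imp (fun x y => hER x y)), by simpa using hxq'⟩
  have h1 := hm.2 _ key
  simp only [cw, List.take_succ_cons, List.take_zero, List.cons_append, List.append_assoc] at h1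
  rw [← List.cons_append, wt_split, ← List.cons_append (as := P'),  wt_split E (a :: P'), hPx,
      List.append_assoc, List.singleton_append, wt_split E P'', ← hPx, wt_chain E _ hPc] at h1
  have h2 : 0 < wt E (a :: (Y ++ [b])) := by
    apply wt_pos E D₁ hDE₁ a _ ha
    exact ⟨b, by simp, fun h => hdisj _ h hb⟩
  have h3 := wt_single_le E x q
  have h4 : wt E (b :: q :: (Q ++ [a])) = 1 + wt E (q :: (Q ++ [a])) := by
    simp [wt, hbq]
  simp only [List.cons_append] at h1 h2
  omega

theorem three {α κ : Type*} {R E : α → α → Prop} (hER : ∀ x y, E x y → R x y)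
    (D : κ → α → Prop) (hDE : ∀ i x y, E x y → D i x → D i y) (hC : ∀ i, Conn E (D i))
    (hdisj : ∀ i j x, D i x → D j x → i = j) (lab : α → ℕ)
    (hJ : ∀ i j a b, D i a → D j b → R a b → ¬ E a b → lab a ≠ lab b)
    (hrep : ∀ i b x q, D i b → (∃ j, D j x) → lab x = lab b → R b q → ¬ E b q → x ≠ q → R x q)
    (i₁ i₂ i₃ : κ) (h12 : i₁ ≠ i₂) (h13 : i₁ ≠ i₃) (h23 : i₂ ≠ i₃)
    (hty : ∀ i j, (i = i₁ ∨ i = i₂ ∨ i = i₃) → (j = i₁ ∨ j = i₂ ∨ j = i₃) →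
      ∀ b, D j b → ∃ x, D i x ∧ lab x = lab b)
    (l : List α) (hm : Min R E l) (ht₁ : ∃ x ∈ l, D i₁ x) (ht₂ : ∃ x ∈ l, D i₂ x)
    (ht₃ : ∃ x ∈ l, D i₃ x) : False := by
  have hMerge : ∀ i j, (i = i₁ ∨ i = i₂ ∨ i = i₃) → (j = i₁ ∨ j = i₂ ∨ j = i₃) → i ≠ j →
      ∀ a b Y Q, Min R E (a :: (Y ++ b :: Q)) → D i a → D j b → (∀ y ∈ Q, ¬ D i y) →
      (∀ y ∈ Q, ¬ D j y) → (2 ≤ Q.length ∨ (1 ≤ Q.length ∧ lab b ≠ lab a)) → False := by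
    intro i j hi hj hij a b Y Q hm ha hb h1 h2 hlen
    obtain ⟨x, hx, hxl⟩ := hty i j hi hj b hb
    refine merge hER (D i) (D j) (hDE i) (hC i) (hDE j) (fun x h h' => hij (hdisj _ _ _ h h'))
      a b Y Q hm ha hb h1 h2 x hx (fun q => hrep j b x q hb ⟨i, hx⟩ hxl) ?_
    rcases hlen with h | ⟨h, h'⟩
    · exact Or.inl h
    · exact Or.inr ⟨h, by rintro rfl; exact h' hxl.symm⟩
  obtain ⟨S, l₂, hr, hS, hl₂⟩ := contig hER (D i₁) (hDE i₁) (hC i₁) l hm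
  have hm1 := hm.isRotated hr
  have mem : ∀ y, y ∈ l ↔ y ∈ S ∨ y ∈ l₂ := fun y => by rw [hr.mem_iff]; simp
  have hSne : S ≠ [] := by
    rintro rfl
    obtain ⟨x, hx, hxD⟩ := ht₁
    rw [mem] at hx
    simp at hx
    exact hl₂ x hx hxD
  have ht₂' : ∃ x ∈ l₂, D i₂ x := by
    obtain ⟨x, hx, hxD⟩ := ht₂
    rcases (mem x).1 hx with h | h
    · exact absurd (hdisj _ _ _ (hS _ h) hxD) h12
    · exact ⟨x, h, hxD⟩
  have ht₃' : ∃ x ∈ l₂, D i₃ x := by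
    obtain ⟨x, hx, hxD⟩ := ht₃
    rcases (mem x).1 hx with h | h
    · exact absurd (hdisj _ _ _ (hS _ h) hxD) h13
    · exact ⟨x, h, hxD⟩
  -- wlog order
  have main : ∀ j₂ j₃, (j₂ = i₁ ∨ j₂ = i₂ ∨ j₂ = i₃) → (j₃ = i₁ ∨ j₃ = i₂ ∨ j₃ = i₃) →
      i₁ ≠ j₂ → i₁ ≠ j₃ → j₂ ≠ j₃ → ∀ X b Q, l₂ = X ++ b :: Q → D j₂ b →
      (∀ y ∈ Q, ¬ D j₂ y) → (∃ c ∈ Q, D j₃ c) → False := by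
    intro j₂ j₃ hj₂ hj₃ n12 n13 n23 X b Q hl hb hQ hc
    subst hl
    obtain ⟨c, hcQ, hc⟩ := hc
    obtain ⟨a, S', rfl⟩ := List.exists_cons_of_ne_nil hSne
    have haD : D i₁ a := hS a (by simp)
    have hQlen : Q.length = 1 := by
      have := List.length_pos_of_mem hcQ
      by_contra hne
      exact hMerge i₁ j₂ (Or.inl rfl) hj₂ n12 a b (S' ++ X) Q (by simpa using hm1) haD hb
        (fun y hy => hl₂ y (by simp [hy])) hQ (Or.inl (by omega))
    obtain ⟨c', rfl⟩ := List.length_eq_one_iff.1 hQlen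
    obtain rfl : c = c' := by simpa using hcQ
    have nX₃ : ∀ y ∈ X, ¬ D j₃ y := by
      intro v hv hvD
      obtain ⟨X1, X2, rfl⟩ := List.append_of_mem hv
      refine no_bad' hER (D j₃) (hDE _) (hC _) v c (X2 ++ [b]) (a :: S' ++ X1) ?_ hvD hc
        ⟨b, by simp, fun h => n23 (hdisj _ _ _ hb h)⟩ ⟨a, by simp, fun h => n13 (hdisj _ _ _ haD h)⟩
      have := Min.rot (a :: S' ++ X1) (v :: X2 ++ [b, c]) (by simpa using hm1)
      simpa using this
    -- second merge
    have hXnil : X = [] := by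
      by_contra hX
      obtain ⟨S0, a', hS0⟩ := List.eq_nil_or_concat' (a :: S') |>.resolve_left (by simp)
      rw [hS0] at hm1 hS
      refine hMerge j₃ i₁ hj₃ (Or.inl rfl) n13.symm c a' S0 (X ++ [b]) ?_ hc
        (hS a' (by simp)) ?_ ?_ (Or.inl ?_)
      · have := Min.rot (S0 ++ [a'] ++ X ++ [b]) [c] (by simpa using hm1)
        simpa using this
      · intro y hy
        rcases List.mem_append.1 hy with h | h
        · exact nX₃ y h
        · obtain rfl : y = b := by simpa using h
          exact fun h => n23 (hdisj _ _ _ hb h)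
      · intro y hy
        apply hl₂
        simp at hy ⊢; tauto
      · have := List.length_pos_iff.2 hX
        simp; omega
    subst hXnil
    have hSnil : S' = [] := by
      by_contra hX
      refine hMerge j₂ j₃ hj₂ hj₃ n23 b c [] (a :: S') ?_ hb hc
        (fun y hy h => n12 (hdisj _ _ _ (hS y hy) h)) (fun y hy h => n13 (hdisj _ _ _ (hS y hy) h))
        (Or.inl ?_)
      · have := Min.rot (a :: S') [b, c] (by simpa using hm1)
        simpa using this
      · have := List.length_pos_iff.2 hX
        simp; omega
    subst hSnil
    have hR : R a b := by
      have := hm1.1.2.2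
      simp at this
      exact this.1
    refine hMerge i₁ j₂ (Or.inl rfl) hj₂ n12 a b [] [c] (by simpa using hm1) haD hb ?_ hQ
      (Or.inr ⟨by simp, ?_⟩)
    · intro y hy
      exact hl₂ y (by simp at hy ⊢; tauto)
    · exact (hJ _ _ a b haD hb hR
        (fun h => n12 (hdisj _ _ _ (hDE _ _ _ h haD) hb))).symm
  obtain ⟨X, b, Q, hl, hb, hQ⟩ := split_last (D i₂) l₂ ht₂'
  by_cases h : ∃ c ∈ Q, D i₃ c
  · exact main i₂ i₃ (by simp) (by simp) h12 h13 h23 X b Q hl hb hQ h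
  · push Not at h
    have : ∃ c ∈ X, D i₃ c := by
      obtain ⟨c, hc, hcD⟩ := ht₃'
      rw [hl] at hc
      simp only [List.mem_append, List.mem_cons] at hc
      rcases hc with hc | rfl | hc
      · exact ⟨c, hc, hcD⟩
      · exact absurd (hdisj _ _ _ hb hcD) h23
      · exact absurd hcD (h c hc)
    obtain ⟨X', c, X'', rfl, hc, hX⟩ := split_last (D i₃) X this
    refine main i₃ i₂ (by simp) (by simp) h13 h12 h23.symm X' c (X'' ++ b :: Q) (by simp [hl]) hc
      ?_ ⟨b, by simp, hb⟩
    intro y hy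
    simp only [List.mem_append, List.mem_cons] at hy
    rcases hy with hy | rfl | hy
    · exact hX y hy
    · exact fun hh => h23 (hdisj _ _ _ hb hh)
    · exact h y hy

theorem cyc_of_walk {α : Type*} {G : SimpleGraph α} {x : α} (c : G.Walk x x) (hc : c.IsCycle) :
    Cyc G.Adj c.support.tail := by
  refine ⟨hc.support_nodup, by simpa using hc.three_le_length, ?_⟩
  have h3 := hc.three_le_length
  cases c with
  | nil => simp at h3
  | cons h p =>
    rename_i v
    have hp : p.support = v :: p.support.tail := by simp
    rw [SimpleGraph.Walk.support_cons, List.tail_cons, hp, List.take_succ_cons, List.take_zero,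
      ← hp]
    have : p.support = p.support.dropLast ++ [x] := by
      conv_lhs => rw [← List.dropLast_append_getLast p.support_ne_nil]
      simp
    rw [this, List.append_assoc, List.singleton_append, List.isChain_split, ← this]
    exact ⟨p.isChain_adj_support, by simpa using h⟩

theorem walk_of_cyc {α : Type*} {G : SimpleGraph α} (l : List α) (hl : Cyc G.Adj l) :
    ∃ (x : α) (c : G.Walk x x), c.IsCycle ∧ c.support.tail ~r l ∧ ∀ y, y ∈ c.support ↔ y ∈ l := by
  obtain ⟨h1, h2, h3⟩ := hl
  cases l with
  | nil => simp at h2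
  | cons a t =>
    simp only [List.take_succ_cons, List.take_zero] at h3
    let c0 := SimpleGraph.Walk.ofSupport _ (by simp) h3
    let c : G.Walk a a := c0.copy (by simp) (by simp)
    have hs : c.support = a :: (t ++ [a]) :=
      (SimpleGraph.Walk.support_copy _ _ _).trans
        (SimpleGraph.Walk.support_ofSupport (G := G) _ h3)
    have hst : c.support.tail = t ++ [a] := by simp [hs]
    have hlen : 3 ≤ c.length := by
      have := c.length_support
      rw [hs] at this
      simp at this h2
      omega
    refine ⟨a, c, ?_, ?_, ?_⟩
    · rw [SimpleGraph.Walk.isCycle_iff_isPath_tail_and_le_length]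
      refine ⟨?_, hlen⟩
      apply SimpleGraph.Walk.IsPath.mk'
      rw [SimpleGraph.Walk.support_tail_of_not_nil, hst]
      · rw [← List.nodup_rotate (n := 1)] at h1; simpa using h1
      · intro h
        rw [← SimpleGraph.Walk.length_eq_zero_iff] at h
        omega
    · rw [hst]
      exact (List.isRotated_append (l := t) (l' := [a]))
    · intro y
      rw [hs]; simp; tauto

theorem exists_minimal_wt {α : Type*} {R E : α → α → Prop} (h : ∃ l, Cyc R l) :
    ∃ l, Min R E l := by
  obtain ⟨l, h1, h2⟩ := WellFounded.has_min (measure (cw E)).wf {l | Cyc R l} h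
  exact ⟨l, h1, fun l' hl' => not_lt.1 (h2 l' hl')⟩

end CycStr

open CycStr in
/-- If `F` is an extended `k`-labeled forest (a forest with exactly one
vertex labeled 0) and the glueing `Glue(F; d)` contains a cycle, then it contains a simple
cycle `C'` such that (i) for every connected component `D` of `F` the vertices of `D` on
`C'` occur as a contiguous (possibly empty) segment of `C'`, and (ii) for every type vector
`v`, at most two connected components of `F` of type `v` contain a vertex of `C'`. -/
theorem cycle_structure {k : ℕ} (F : LGraph k) (hF : F.G.IsAcyclic)
    (hzero : ∃! v : F.V, F.lab v = 0)
    (d : ExtDatum k) (hcyc : ¬ (glue F d).IsAcyclic) :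
    ∃ (x : F.V ⊕ d.W) (c : (glue F d).Walk x x), c.IsCycle ∧
      (∀ D : F.G.ConnectedComponent, ∃ l₁ l₂ : List (F.V ⊕ d.W),
        List.IsRotated c.support.tail (l₁ ++ l₂) ∧
        (∀ y ∈ l₁, ∃ u, y = Sum.inl u ∧ u ∈ D.supp) ∧
        (∀ y ∈ l₂, ¬ ∃ u, y = Sum.inl u ∧ u ∈ D.supp)) ∧
      (∀ v : Fin (k + 1) → ℕ,
        Set.ncard {D : F.G.ConnectedComponent |
          labv F D.supp = v ∧ ∃ u ∈ D.supp, Sum.inl u ∈ c.support} ≤ 2) := by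
  let E : F.V ⊕ d.W → F.V ⊕ d.W → Prop := fun x y => ∃ u v, x = Sum.inl u ∧ y = Sum.inl v ∧
    F.G.Adj u v
  let D : F.G.ConnectedComponent → F.V ⊕ d.W → Prop := fun D y => ∃ u, y = Sum.inl u ∧ u ∈ D.supp
  let R := (glue F d).Adj
  have hER : ∀ x y, E x y → R x y := by
    rintro x y ⟨u, v, rfl, rfl, h⟩
    simp only [R, glue, SimpleGraph.fromRel_adj]
    exact ⟨by simpa using h.ne, Or.inl (Or.inl h)⟩
  have hDE : ∀ i x y, E x y → D i x → D i y := by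
    rintro i x y ⟨u, v, rfl, rfl, h⟩ ⟨u', h1, h2⟩
    obtain rfl := Sum.inl.inj h1
    refine ⟨v, rfl, ?_⟩
    rw [SimpleGraph.ConnectedComponent.mem_supp_iff] at h2 ⊢
    rw [← h2]
    exact (SimpleGraph.ConnectedComponent.connectedComponentMk_eq_of_adj h).symm
  have hC : ∀ i, Conn E (D i) := by
    rintro i _ _ ⟨u, rfl, hu⟩ ⟨v, rfl, hv⟩ hne
    have hne' : u ≠ v := fun h => hne (by rw [h])
    rw [SimpleGraph.ConnectedComponent.mem_supp_iff] at hu hv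
    obtain ⟨p, hp⟩ := (SimpleGraph.ConnectedComponent.exact (hu.trans hv.symm)).exists_isPath
    have hs : ∃ M, p.support = u :: (M ++ [v]) := by
      cases p with
      | nil => exact absurd rfl hne'
      | cons h q =>
        refine ⟨q.support.dropLast, ?_⟩
        rw [SimpleGraph.Walk.support_cons]
        congr 1
        conv_lhs => rw [← List.dropLast_append_getLast q.support_ne_nil]
        simp
    obtain ⟨M, hM⟩ := hs
    have h1 := p.isChain_adj_support
    have h2 := hp.support_nodup
    rw [hM] at h1 h2
    have e : (Sum.inl u :: (M.map Sum.inl ++ [Sum.inl v]) : List (F.V ⊕ d.W)) =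
      (u :: (M ++ [v])).map Sum.inl := by simp
    refine ⟨M.map Sum.inl, ?_, ?_⟩
    · rw [e, List.isChain_map]
      exact h1.imp (fun a b h => ⟨a, b, rfl, rfl, h⟩)
    · rw [e]
      exact h2.map Sum.inl_injective
  have hdisj : ∀ i j x, D i x → D j x → i = j := by
    rintro i j x ⟨u, rfl, hu⟩ ⟨v, h, hv⟩
    obtain rfl := Sum.inl.inj h
    rw [SimpleGraph.ConnectedComponent.mem_supp_iff] at hu hv
    exact hu.symm.trans hv
  let lab : F.V ⊕ d.W → ℕ := Sum.elim (fun u => (F.lab u : ℕ)) (fun _ => 0)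
  have hJ : ∀ i j a b, D i a → D j b → R a b → ¬ E a b → lab a ≠ lab b := by
    rintro i j _ _ ⟨u, rfl, hu⟩ ⟨v, rfl, hv⟩ h hE hl
    have hl' : F.lab u = F.lab v := Fin.ext hl
    simp only [R, glue, SimpleGraph.fromRel_adj] at h
    rcases h.2 with (h | h) | (h | h)
    · exact hE ⟨u, v, rfl, rfl, h⟩
    · rw [hl'] at h; exact d.Jirrefl _ h
    · exact hE ⟨u, v, rfl, rfl, h.symm⟩
    · rw [hl'] at h; exact d.Jirrefl _ h
  have hrep : ∀ i b x q, D i b → (∃ j, D j x) → lab x = lab b → R b q → ¬ E b q → x ≠ q →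
      R x q := by
    rintro i _ _ q ⟨u, rfl, hu⟩ ⟨j, v, rfl, hv⟩ hl h hE hne
    have hl' : F.lab v = F.lab u := Fin.ext hl
    simp only [R, glue, SimpleGraph.fromRel_adj] at h ⊢
    refine ⟨hne, ?_⟩
    cases q with
    | inl q =>
      simp only at h ⊢
      rw [hl']
      rcases h.2 with (h | h) | (h | h)
      · exact absurd ⟨u, q, rfl, rfl, h⟩ hE
      · exact Or.inl (Or.inr h)
      · exact absurd ⟨u, q, rfl, rfl, h.symm⟩ hE
      · exact Or.inr (Or.inr h)
    | inr w =>
      simp only at h ⊢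
      rw [hl']
      exact h.2
  have hex : ∃ l, Min R E l := by
    have : ∃ l, Cyc R l := by
      unfold SimpleGraph.IsAcyclic at hcyc
      push Not at hcyc
      obtain ⟨x, c, hc⟩ := hcyc
      exact ⟨_, cyc_of_walk c hc⟩
    exact exists_minimal_wt this
  obtain ⟨l, hm⟩ := hex
  obtain ⟨x, c, hc, hcr, hcs⟩ := walk_of_cyc l hm.1
  refine ⟨x, c, hc, ?_, ?_⟩
  · intro i
    obtain ⟨l₁, l₂, h1, h2, h3⟩ := contig hER (D i) (hDE i) (hC i) l hm
    exact ⟨l₁, l₂, hcr.trans h1, h2, h3⟩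
  · intro v
    by_contra hcard
    push Not at hcard
    have hfin := Set.finite_of_ncard_pos (lt_trans (by norm_num) hcard)
    obtain ⟨i₁, i₂, i₃, m1, m2, m3, n12, n13, n23⟩ := (Set.two_lt_ncard_iff hfin).1 hcard
    have touch : ∀ i : F.G.ConnectedComponent, (∃ u ∈ i.supp, Sum.inl u ∈ c.support) →
        ∃ x ∈ l, D i x := by
      rintro i ⟨u, hu, hu'⟩
      exact ⟨Sum.inl u, (hcs _).1 hu', u, rfl, hu⟩
    refine three hER D hDE hC hdisj lab hJ hrep i₁ i₂ i₃ n12 n13 n23 ?_ l hm (touch _ m1.2)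
      (touch _ m2.2) (touch _ m3.2)
    rintro i j hi hj _ ⟨b, rfl, hb⟩
    have hi' : labv F i.supp = v := by rcases hi with rfl | rfl | rfl <;> [exact m1.1; exact m2.1; exact m3.1]
    have hj' : labv F j.supp = v := by rcases hj with rfl | rfl | rfl <;> [exact m1.1; exact m2.1; exact m3.1]
    have heq := congrFun (hi'.trans hj'.symm) (F.lab b)
    haveI := F.fintype
    have hpos : 0 < Set.ncard {v | v ∈ j.supp ∧ F.lab v = F.lab b} :=
      (Set.ncard_pos (Set.toFinite _)).2 ⟨b, hb, rfl⟩
    have hpos' : 0 < Set.ncard {v | v ∈ i.supp ∧ F.lab v = F.lab b} := by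
      simp only [labv] at heq
      omega
    obtain ⟨y, hy, hyl⟩ := (Set.ncard_pos (Set.toFinite _)).1 hpos'
    exact ⟨Sum.inl y, ⟨y, rfl, hy⟩, congrArg Fin.val hyl⟩
end

section
/- Let p be a nice pattern, i.e., a pattern in which every vector other than its zero vector z is a unit vector e_i for some i ∈ {1,…,k}. Let p' be the pattern obtained from p by reducing, for each i ∈ {1,…,k}, the multiplicity of e_i by max(0, tot_i(p) − 2), where tot_i(p) = Σ_{v ∈ p} v_i (summed with multiplicity); thus p' is a nice pattern with the same zero vector and tot_i(p') = min(2, tot_i(p)) for all i ∈ {1,…,k}. Then the canonical forests F_p and F_{p'} are equivalent: for every extension datum d, Glue(F_p; d) is acyclic if and only if Glue(F_{p'}; d) is acyclic. -/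
/-- Cap all multiplicities of a multiset at 2. -/
def cap2 {α : Type*} [DecidableEq α] (m : Multiset α) : Multiset α :=
  m.toFinset.val.bind fun a => Multiset.replicate (min 2 (m.count a)) a

/-- The pattern `pat(F)` of a labeled graph: the multiset of types of its connected
components, with multiplicities capped at 2. -/
noncomputable def patLG {k : ℕ} (F : LGraph k) : Multiset (Fin (k + 1) → ℕ) :=
  haveI := F.fintype
  haveI : Fintype F.G.ConnectedComponent := Fintype.ofFinite _
  cap2 ((Finset.univ : Finset F.G.ConnectedComponent).val.map fun D => labv F D.supp)

/-- The list of labels of the canonical path associated to a vector `v`: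
`v j` vertices labeled `j`, in a fixed order. -/
def pathLabels (k : ℕ) (v : Fin (k + 1) → ℕ) : List (Fin (k + 1)) :=
  (List.finRange (k + 1)).flatMap fun j => List.replicate (v j) j

/-- The canonical forest `F_p` of a pattern `p`: one disjoint simple path for each vector
of `p` (with multiplicity), the path for `v` having exactly `v j` vertices labeled `j`. -/
noncomputable def canonForest (k : ℕ) (p : Multiset (Fin (k + 1) → ℕ)) : LGraph k where
  V := Σ i : Fin p.toList.length, Fin ((pathLabels k (p.toList.get i)).length)
  fintype := inferInstance
  G := SimpleGraph.fromRel fun a b => a.1 = b.1 ∧ a.2.val + 1 = b.2.val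
  lab := fun a => (pathLabels k (p.toList.get a.1)).get a.2

/-- A multiset of vectors is a pattern if every vector has entries at most 2, every vector
has multiplicity at most 2, and there is exactly one vector `z` (its zero vector, of
multiplicity 1) with `z 0 = 1`, all other vectors `v` having `v 0 = 0`. -/
def IsPattern (k : ℕ) (p : Multiset (Fin (k + 1) → ℕ)) : Prop :=
  (∀ v ∈ p, ∀ j, v j ≤ 2) ∧ (∀ v, p.count v ≤ 2) ∧
    ∃ z ∈ p, p.count z = 1 ∧ z 0 = 1 ∧ ∀ v ∈ p, v ≠ z → v 0 = 0

/-- Two labeled forests are equivalent if gluing with any extension datum gives an acyclic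
graph for one iff it does for the other. -/
def EquivLF {k : ℕ} (F₁ F₂ : LGraph k) : Prop :=
  ∀ d : ExtDatum k, (glue F₁ d).IsAcyclic ↔ (glue F₂ d).IsAcyclic

/-- The two-sum of two vectors: coordinatewise sum capped at 2. -/
def twoSum {k : ℕ} (u v : Fin (k + 1) → ℕ) : Fin (k + 1) → ℕ := fun j => min 2 (u j + v j)

/-- The unit vector `e_i`. -/
def unitVec (k : ℕ) (i : Fin (k + 1)) : Fin (k + 1) → ℕ := fun j => if j = i then 1 else 0

/-- `tot_i(p) = Σ_{v ∈ p} v i` (with multiplicity). -/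
def tot {k : ℕ} (p : Multiset (Fin (k + 1) → ℕ)) (i : Fin (k + 1)) : ℕ :=
  (p.map fun v => v i).sum

open SimpleGraph in
theorem cpe_leaf {V V' : Type} {G : SimpleGraph V} {H : SimpleGraph V'} (f : H ↪g G) (x : V)
    (hx : ∀ y, y ≠ x → ∃ v, f v = y) (a b : V') (hab : a ≠ b) 
    (ha : ∀ y, G.Adj x y → y ≠ x ∧ G.Adj (f a) y ∧ G.Adj (f b) y) :
    G.IsAcyclic ↔ H.IsAcyclic := by
  refine ⟨fun h => h.embedding f, fun h => ?_⟩
  have huniq : ∀ y y', G.Adj x y → G.Adj x y' → y = y' := by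
    intro y y' h1 h2
    by_contra hne
    obtain ⟨n1, a1, b1⟩ := ha y h1
    obtain ⟨n2, a2, b2⟩ := ha y' h2
    obtain ⟨v, rfl⟩ := hx y n1
    obtain ⟨w, rfl⟩ := hx y' n2
    rw [f.map_adj_iff] at a1 a2 b1 b2
    have hvw : v ≠ w := fun h => hne (by rw [h])
    let c : H.Walk a a := .cons a1 (.cons b1.symm (.cons b2 (.cons a2.symm .nil)))
    apply h c
    simp only [c, Walk.cons_isCycle_iff]
    have := a1.ne; have := a2.ne; have := b1.ne; have := b2.ne
    constructor
    · simp [Walk.cons_isPath_iff]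
      grind
    · simp
      grind
  intro u c hc
  classical
  by_cases hxs : x ∈ c.support
  · have hc' := hc.rotate hxs
    apply hc'.snd_ne_penultimate
    apply huniq
    · exact Walk.adj_snd hc'.not_nil
    · exact (Walk.adj_penultimate hc'.not_nil).symm
  · have hs : ∀ w ∈ c.support, w ∈ ({x}ᶜ : Set V) := by
      intro w hw hwx
      rw [Set.mem_singleton_iff] at hwx
      exact hxs (hwx ▸ hw)
    have hc2 : (c.induce _ hs).IsCycle := by
      have := Walk.map_induce c hs
      rw [← this] at hc
      exact (Walk.isCycle_map_iff_of_injective (by exact Subtype.val_injective)).1 hc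
    have : (G.induce ({x}ᶜ : Set V)).IsAcyclic := by
      choose g hg using fun y : ({x}ᶜ : Set V) => hx y.1 y.2
      refine h.comap ⟨g, ?_⟩ ?_
      · intro y y' hyy
        rw [← f.map_adj_iff, hg, hg]
        exact hyy
      · intro y y' hyy
        have h3 : f (g y) = f (g y') := congrArg f hyy
        rw [hg, hg] at h3
        exact Subtype.ext h3
    exact this _ hc2

theorem cpe_card {α : Type} [DecidableEq α] (l : List α) (a : α) :
    (Finset.univ.filter fun i : Fin l.length => l.get i = a).card = l.count a := by
  have := Fin.card_filter_univ_eq_vector_get_eq_count a (⟨l, rfl⟩ : List.Vector α l.length)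
  refine Eq.trans ?_ this
  congr 1

theorem cpe_perm {α : Type} [DecidableEq α] {l l' : List α} (h : l.Perm l') :
    ∃ e : Fin l.length ≃ Fin l'.length, ∀ i, l'.get (e i) = l.get i := by
  have : ∀ c, Nonempty ({a // l.get a = c} ≃ {b // l'.get b = c}) := by
    intro c
    rw [← Fintype.card_eq, Fintype.card_subtype, Fintype.card_subtype, cpe_card, cpe_card]
    exact h.count_eq c
  let E := fun c => (this c).some
  exact ⟨Equiv.ofFiberEquiv E, fun i => Equiv.ofFiberEquiv_map E i⟩

theorem cpe_count (k : ℕ) (v : Fin (k + 1) → ℕ) (i : Fin (k + 1)) :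
    (pathLabels k v).count i = v i := by
  rw [pathLabels, List.count_flatMap]
  have : (List.count i ∘ fun j => List.replicate (v j) j) = fun j => if j = i then v j else 0 := by
    funext j
    simp [List.count_replicate]
  rw [this, ← List.ofFn_eq_map, List.sum_ofFn]
  simp

theorem cpe_unit (k : ℕ) (i : Fin (k + 1)) : pathLabels k (unitVec k i) = [i] := by
  have h := cpe_count k (unitVec k i)
  have : (pathLabels k (unitVec k i)).Perm [i] := by
    rw [List.perm_iff_count]
    intro a
    rw [h]
    by_cases hai : a = i
    · subst hai; simp [unitVec]
    · simp [unitVec, hai, Ne.symm hai, List.count_singleton]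
  exact List.perm_singleton.1 this

theorem cpe_two {k : ℕ} (q : Multiset (Fin (k + 1) → ℕ)) (i : Fin (k + 1)) (h : 2 ≤ tot q i) :
    ∃ a b : (canonForest k q).V, a ≠ b ∧ (canonForest k q).lab a = i ∧
      (canonForest k q).lab b = i := by
  let _ : Fintype (canonForest k q).V := (canonForest k q).fintype
  have : (Finset.univ.filter fun a => (canonForest k q).lab a = i).card = tot q i := by
    rw [Finset.card_filter]
    have := Fintype.sum_sigma (fun a : (canonForest k q).V => if (canonForest k q).lab a = i then 1 else 0)
    refine this.trans ?_
    have h2 : ∀ j : Fin q.toList.length, (∑ y : Fin ((pathLabels k (q.toList.get j)).length),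
        if (canonForest k q).lab ⟨j, y⟩ = i then 1 else 0) = q.toList.get j i := by
      intro j
      rw [← Finset.card_filter, ← cpe_count k (q.toList.get j) i, ← cpe_card]
      rfl
    rw [Finset.sum_congr rfl (fun j _ => h2 j), tot, ← Multiset.sum_map_toList]
    exact Fin.sum_univ_fun_getElem q.toList (fun v => v i)
  rw [← this] at h
  obtain ⟨a, ha, b, hb, hab⟩ := Finset.one_lt_card.1 h
  exact ⟨a, b, hab, (Finset.mem_filter.1 ha).2, (Finset.mem_filter.1 hb).2⟩

theorem cpe_emb {k : ℕ} (q : Multiset (Fin (k + 1) → ℕ)) (i : Fin (k + 1)) :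
    ∃ (x : (canonForest k (unitVec k i ::ₘ q)).V) (f : (canonForest k q).G ↪g 
      (canonForest k (unitVec k i ::ₘ q)).G),
      (∀ v, (canonForest k (unitVec k i ::ₘ q)).lab (f v) = (canonForest k q).lab v) ∧
      (canonForest k (unitVec k i ::ₘ q)).lab x = i ∧
      (∀ y, y ≠ x → ∃ v, f v = y) ∧ (∀ y, ¬ (canonForest k (unitVec k i ::ₘ q)).G.Adj x y) := by
  have hperm : (unitVec k i :: q.toList).Perm (unitVec k i ::ₘ q).toList := by
    rw [← Multiset.coe_eq_coe, ← Multiset.cons_coe, Multiset.coe_toList, Multiset.coe_toList]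
  obtain ⟨e, he⟩ := cpe_perm hperm
  have he0 : (unitVec k i ::ₘ q).toList.get (e ⟨0, by simp⟩) = unitVec k i := he _
  have hes : ∀ j : Fin q.toList.length,
      (unitVec k i ::ₘ q).toList.get (e j.succ) = q.toList.get j := fun j => he _
  have hl0 : pathLabels k ((unitVec k i ::ₘ q).toList.get (e ⟨0, by simp⟩)) = [i] := by
    rw [he0, cpe_unit]
  have hls : ∀ j, pathLabels k ((unitVec k i ::ₘ q).toList.get (e (Fin.succ j))) =
    pathLabels k (q.toList.get j) := fun j => by rw [hes]
  have hlen0 := congrArg List.length hl0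
  have hlens := fun j => congrArg List.length (hls j)
  let F : (canonForest k q).V → (canonForest k (unitVec k i ::ₘ q)).V :=
    fun a => ⟨e a.1.succ, Fin.cast (hlens a.1).symm a.2⟩
  have hF : Function.Injective F := by
    rintro ⟨j, t⟩ ⟨j', t'⟩ h
    have h1 : j = j' := by
      have := congrArg Sigma.fst h
      exact Fin.succ_injective _ (e.injective this)
    subst h1
    have h2 := eq_of_heq (Sigma.mk.inj h).2
    congr 1
    simpa using h2
  let x : (canonForest k (unitVec k i ::ₘ q)).V := ⟨e ⟨0, by simp⟩, ⟨0, by rw [hlen0]; simp⟩⟩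
  have hxall : ∀ y : (canonForest k (unitVec k i ::ₘ q)).V, y.1 = x.1 → y = x := by
    rintro ⟨j, t⟩ h
    obtain rfl : j = e ⟨0, by simp⟩ := h
    have : t.val < 1 := lt_of_lt_of_eq t.2 hlen0
    simp only [x]
    congr 1
    apply Fin.ext
    simp; omega
  refine ⟨x, ⟨⟨F, hF⟩, ?_⟩, ?_, ?_, ?_, ?_⟩
  · intro a b
    show (canonForest k (unitVec k i ::ₘ q)).G.Adj (F a) (F b) ↔ _
    have h1 : F a ≠ F b ↔ a ≠ b := hF.ne_iff
    have h2 : ∀ a b : (canonForest k q).V, (F a).1 = (F b).1 ↔ a.1 = b.1 := by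
      intro a b
      constructor
      · intro h; exact Fin.succ_injective _ (e.injective h)
      · intro h; simp only [F]; rw [h]
    have h3 : ∀ a, (F a).2.val = a.2.val := fun a => rfl
    have := h2 a b
    have := h2 b a
    have := h3 a
    have := h3 b
    have hA := SimpleGraph.fromRel_adj (fun a b : (canonForest k q).V =>
      a.1 = b.1 ∧ a.2.val + 1 = b.2.val) a b
    have hA' := SimpleGraph.fromRel_adj (fun a b : (canonForest k (unitVec k i ::ₘ q)).V =>
      a.1 = b.1 ∧ a.2.val + 1 = b.2.val) (F a) (F b)
    refine hA'.trans (Iff.trans ?_ hA.symm)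
    rw [h1, h2 a b, h2 b a, h3 a, h3 b]
  · intro a
    show (canonForest k (unitVec k i ::ₘ q)).lab (F a) = _
    simp only [canonForest, F, List.get_eq_getElem]
    exact List.getElem_of_eq (hls a.1) _
  · simp only [canonForest, x, List.get_eq_getElem]
    exact List.getElem_of_eq hl0 _
  · rintro ⟨j, t⟩ hy
    obtain ⟨j, rfl⟩ := e.surjective j
    rcases Fin.eq_zero_or_eq_succ j with rfl | ⟨j, rfl⟩
    · exact absurd (hxall ⟨_, t⟩ rfl) hy
    · exact ⟨⟨j, Fin.cast (hlens j) t⟩, rfl⟩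
  · intro y hxy
    have h := (SimpleGraph.fromRel_adj _ _ _).1 hxy
    apply h.1
    symm
    apply hxall
    rcases h.2 with h | h
    · exact h.1.symm
    · exact h.1

theorem cpe_step {k : ℕ} (q : Multiset (Fin (k + 1) → ℕ)) (i : Fin (k + 1)) (h : 2 ≤ tot q i) :
    EquivLF (canonForest k (unitVec k i ::ₘ q)) (canonForest k q) := by
  intro d
  obtain ⟨a, b, hab, ha, hb⟩ := cpe_two q i h
  obtain ⟨x, f, hf, hx, hsurj, hiso⟩ := cpe_emb q i
  generalize canonForest k (unitVec k i ::ₘ q) = P at *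
  generalize canonForest k q = Q at *
  let g : glue Q d ↪g glue P d := 
    { toFun := Sum.map f id
      inj' := Sum.map_injective.2 ⟨f.injective, Function.injective_id⟩
      map_rel_iff' := by
        rintro (u | u) (v | v) <;> simp [glue, hf] }
  refine cpe_leaf g (Sum.inl x) ?_ (Sum.inl a) (Sum.inl b) (by simpa using hab) ?_
  · rintro (y | w) hy
    · obtain ⟨v, hv⟩ := hsurj y (fun h => hy (by rw [h]))
      exact ⟨Sum.inl v, by simp [g, hv]⟩
    · exact ⟨Sum.inr w, rfl⟩
  · intro y hy
    refine ⟨hy.ne', ?_⟩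
    rcases y with y | w
    · have hi := d.Jirrefl
      have h1 := hf a
      have h2 := hf b
      have h3 : ¬ P.G.Adj y x := fun h => hiso y h.symm
      have key : d.J i (P.lab y) ∨ d.J (P.lab y) i := by
        simpa [glue, hiso, h3, hx] using hy.2
      have hne : P.lab y ≠ i := by
        intro h; rw [h] at key; exact hi i (by tauto)
      constructor
      · refine ⟨fun h => hne ?_, ?_⟩
        · rw [← Sum.inl_injective h, h1, ha]
        · simp [g, h1, ha]; tauto
      · refine ⟨fun h => hne ?_, ?_⟩
        · rw [← Sum.inl_injective h, h2, hb]
        · simp [g, h2, hb]; tauto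
    · have hm : i ∈ d.L w := by simpa [glue, hx] using hy
      have hg : ∀ v, g (Sum.inl v) = Sum.inl (f v) := fun v => rfl
      rw [hg, hg]
      simpa [glue, hf, ha, hb] using hm

theorem cpe_multi {k : ℕ} (q R : Multiset (Fin (k + 1) → ℕ))
    (h : ∀ v ∈ R, ∃ i, v = unitVec k i ∧ 2 ≤ tot q i) :
    EquivLF (canonForest k (R + q)) (canonForest k q) := by
  induction R using Multiset.induction_on with
  | empty => intro d; rw [zero_add]
  | cons v R ih =>
    intro d
    obtain ⟨i, rfl, hi⟩ := h v (by simp)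
    rw [Multiset.cons_add]
    refine (cpe_step (R + q) i ?_ d).trans (ih (fun v hv => h v (by simp [hv])) d)
    simp only [tot, Multiset.map_add, Multiset.sum_add] at *
    omega

/-- Let `p` be a nice pattern (every vector different from its zero vector
`z` is a unit vector `e_i` with `i ∈ {1,…,k}`), and let `p'` be obtained from `p` by
reducing, for each `i ∈ {1,…,k}`, the multiplicity of `e_i` by `max (0, tot_i(p) - 2)`.
Then the canonical forests of `p` and `p'` are equivalent. -/
theorem clean_pattern_equiv {k : ℕ} (p : Multiset (Fin (k + 1) → ℕ))
    (hp : IsPattern k p) (z : Fin (k + 1) → ℕ)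
    (hzmem : z ∈ p) (hz0 : z 0 = 1) (hzcount : p.count z = 1)
    (hnice : ∀ v ∈ p, v ≠ z → ∃ i : Fin (k + 1), i ≠ 0 ∧ v = unitVec k i)
    (p' : Multiset (Fin (k + 1) → ℕ))
    (hp' : p' = p - ((Finset.univ.filter fun i : Fin (k + 1) => i ≠ 0).val.bind
      fun i => Multiset.replicate (tot p i - 2) (unitVec k i))) :
    EquivLF (canonForest k p) (canonForest k p') := by
  set B := ((Finset.univ.filter fun i : Fin (k + 1) => i ≠ 0).val.bind
      fun i => Multiset.replicate (tot p i - 2) (unitVec k i)) with hB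
  have hle : p' ≤ p := by rw [hp']; exact tsub_le_self
  have hR : p - p' ≤ B := by
    rw [hp']
    exact tsub_tsub_le
  have hpp : (p - p') + p' = p := tsub_add_cancel_of_le hle
  have htB : ∀ i, i ≠ 0 → tot B i = tot p i - 2 := by
    intro i hi
    simp only [tot, hB, Multiset.map_bind, Multiset.sum_bind, Multiset.map_replicate,
      Multiset.sum_replicate]
    have : (∑ j ∈ (Finset.univ.filter fun i : Fin (k + 1) => i ≠ 0),
      (tot p j - 2) * unitVec k j i) = tot p i - 2 := by
      rw [Finset.sum_eq_single i]
      · simp [unitVec]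
      · intro j _ hj
        simp [unitVec, hj.symm]
      · simp [hi]
    exact this
  have hadd : ∀ (s t : Multiset (Fin (k + 1) → ℕ)) i, tot (s + t) i = tot s i + tot t i := by
    intro s t i; simp [tot]
  have := cpe_multi p' (p - p') (by
    intro v hv
    have hv2 := Multiset.mem_of_le hR hv
    obtain ⟨i, hi, hvi⟩ := Multiset.mem_bind.1 hv2
    have hi0 : i ≠ 0 := by simpa using hi
    obtain ⟨hn, rfl⟩ := Multiset.mem_replicate.1 hvi
    refine ⟨i, rfl, ?_⟩
    have h1 := htB i hi0
    have h2 := hadd (p - p') p' i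
    rw [hpp] at h2
    have h3 := hadd (p - p') (B - (p - p')) i
    rw [add_tsub_cancel_of_le hR] at h3
    omega)
  rwa [hpp] at this
end

section
/- Isolation Lemma: Let U be a finite set, let F ⊆ 2^U be a nonempty family of subsets of U, and let N > |U| be a positive integer. For each u ∈ U choose a weight w(u) ∈ {1,2,…,N} uniformly and independently at random. Then the probability that w isolates F, i.e., that there is a unique S' ∈ F with w(S') = min_{S ∈ F} w(S) where w(S) = Σ_{u ∈ S} w(u), is at least 1 − |U|/N. -/
def IsoMin {U : Type} {N : ℕ} (F : Finset (Finset U)) (w : U → Fin N) (S : Finset U) : Prop :=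
  S ∈ F ∧ ∀ T ∈ F, (∑ u ∈ S, ((w u : ℕ) + 1)) ≤ ∑ u ∈ T, ((w u : ℕ) + 1)

def IsoBad {U : Type} {N : ℕ} (F : Finset (Finset U)) (u : U) (w : U → Fin N) : Prop :=
  ∃ S T, IsoMin F w S ∧ IsoMin F w T ∧ u ∈ S ∧ u ∉ T

open scoped Classical in
theorem iso_key {U : Type} {N : ℕ} (F : Finset (Finset U)) (u : U) (w w' : U → Fin N)
    (h : ∀ v, v ≠ u → w v = w' v) (hw : IsoBad F u w) (hw' : IsoBad F u w') : w u = w' u := by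
  obtain ⟨S, T, hS, hT, uS, uT⟩ := hw
  obtain ⟨S', T', hS', hT', uS', uT'⟩ := hw'
  have e : ∀ A : Finset U, u ∉ A →
      (∑ v ∈ A, ((w v : ℕ) + 1)) = ∑ v ∈ A, ((w' v : ℕ) + 1) := by
    intro A hA
    refine Finset.sum_congr rfl fun v hv => ?_
    rw [h v (fun hh => hA (hh ▸ hv))]
  have d : ∀ (x : U → Fin N) (A : Finset U), u ∈ A →
      ((x u : ℕ) + 1) + (∑ v ∈ A.erase u, ((x v : ℕ) + 1)) = ∑ v ∈ A, ((x v : ℕ) + 1) :=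
    fun x A hA => Finset.add_sum_erase A (fun v => (x v : ℕ) + 1) hA
  have a1 := hS.2 T hT.1
  have a2 := hT.2 S hS.1
  have a3 := hS'.2 T' hT'.1
  have a4 := hT'.2 S' hS'.1
  have a5 := hT.2 T' hT'.1
  have a6 := hT'.2 T hT.1
  have a7 := hS.2 S' hS'.1
  have a8 := hS'.2 S hS.1
  have b1 := e T uT
  have b2 := e T' uT'
  have b3 := e (S.erase u) (Finset.notMem_erase u S)
  have b4 := e (S'.erase u) (Finset.notMem_erase u S')
  have c1 := d w S uS
  have c2 := d w S' uS'
  have c3 := d w' S uS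
  have c4 := d w' S' uS'
  apply Fin.ext
  omega

open scoped Classical in
theorem iso_bad_card {U : Type} [Fintype U] {N : ℕ} (F : Finset (Finset U)) (u : U) :
    (Finset.univ.filter fun w : U → Fin N => IsoBad F u w).card * N
      ≤ Fintype.card (U → Fin N) := by
  have : ((Finset.univ.filter fun w : U → Fin N => IsoBad F u w) ×ˢ
      (Finset.univ : Finset (Fin N))).card ≤ (Finset.univ : Finset (U → Fin N)).card := by
    refine Finset.card_le_card_of_injOn (fun p => Function.update p.1 u p.2)
      (fun _ _ => Finset.mem_coe.2 (Finset.mem_univ _)) ?_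
    rintro ⟨w, i⟩ hw ⟨w', i'⟩ hw' heq
    simp only [Finset.coe_product, Set.mem_prod, Finset.mem_coe, Finset.mem_filter,
      Finset.mem_univ, true_and, and_true] at hw hw'
    have hi : i = i' := by simpa using congrFun heq u
    have ho : ∀ v, v ≠ u → w v = w' v := fun v hv => by simpa [hv] using congrFun heq v
    have hu := iso_key F u w w' ho hw hw'
    refine Prod.ext (funext fun v => ?_) hi
    by_cases hv : v = u
    · subst hv; exact hu
    · exact ho v hv
  rw [Finset.card_product, Finset.card_univ, Finset.card_univ, Fintype.card_fin] at this
  exact this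

open scoped Classical in
theorem iso_cover {U : Type} {N : ℕ} (F : Finset (Finset U)) (hF : F.Nonempty)
    (w : U → Fin N) (h : ¬ ∃! S, IsoMin F w S) : ∃ u, IsoBad F u w := by
  obtain ⟨S, hS, hm⟩ := Finset.exists_min_image F (fun S => ∑ u ∈ S, ((w u : ℕ) + 1)) hF
  have hS' : IsoMin F w S := ⟨hS, hm⟩
  by_contra hno
  refine h ⟨S, hS', fun T hT => ?_⟩
  ext u
  constructor
  · intro hu
    by_contra hu'
    exact hno ⟨u, T, S, hT, hS', hu, hu'⟩
  · intro hu
    by_contra hu'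
    exact hno ⟨u, S, T, hS', hT, hu, hu'⟩


open scoped Classical in
/-- **Isolation Lemma.** Let `U` be a finite set, `F` a nonempty family of
subsets of `U`, and `N > |U|`. Choose weights `w(u) ∈ {1,…,N}` (here encoded as
`w : U → Fin N` with the weight of `u` being `(w u).val + 1`) uniformly and independently
at random. Then the probability that there is a unique set in `F` of minimum weight is at
least `1 - |U| / N`. -/
theorem isolation_lemma {U : Type} [Fintype U] (F : Finset (Finset U)) (hF : F.Nonempty)
    (N : ℕ) (hN : Fintype.card U < N) :
    1 - (Fintype.card U : ℚ) / N ≤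
      ((Finset.univ.filter fun w : U → Fin N =>
          ∃! S, S ∈ F ∧ ∀ T ∈ F,
            (∑ u ∈ S, ((w u : ℕ) + 1)) ≤ ∑ u ∈ T, ((w u : ℕ) + 1)).card : ℚ) /
        (Fintype.card (U → Fin N) : ℚ) := by
  have hN0 : 0 < N := by omega
  haveI : NeZero N := ⟨hN0.ne'⟩
  have hNq : (0 : ℚ) < N := by exact_mod_cast hN0
  have hC : (0 : ℚ) < (Fintype.card (U → Fin N) : ℚ) := by exact_mod_cast Fintype.card_pos
  change _ ≤ ((Finset.univ.filter fun w : U → Fin N => ∃! S, IsoMin F w S).card : ℚ) / _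
  have h1 := Finset.card_filter_add_card_filter_not (s := (Finset.univ : Finset (U → Fin N)))
    (fun w : U → Fin N => ∃! S, IsoMin F w S)
  have h2 : (Finset.univ.filter fun w : U → Fin N => ¬ ∃! S, IsoMin F w S).card ≤
      ∑ u : U, (Finset.univ.filter fun w : U → Fin N => IsoBad F u w).card := by
    refine le_trans (Finset.card_le_card fun w hw => ?_) Finset.card_biUnion_le
    obtain ⟨u, hu⟩ := iso_cover F hF w (Finset.mem_filter.1 hw).2
    simp only [Finset.mem_biUnion, Finset.mem_filter, Finset.mem_univ, true_and]
    exact ⟨u, hu⟩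
  have h3 : (∑ u : U, (Finset.univ.filter fun w : U → Fin N => IsoBad F u w).card) * N ≤
      Fintype.card U * Fintype.card (U → Fin N) := by
    rw [Finset.sum_mul]
    refine le_trans (Finset.sum_le_card_nsmul _ _ _ fun u _ => iso_bad_card F u) ?_
    simp
  have h4 := (Nat.mul_le_mul_right N h2).trans h3
  rw [Finset.card_univ] at h1
  generalize (Finset.univ.filter fun w : U → Fin N => ∃! S, IsoMin F w S).card = g at *
  generalize (Finset.univ.filter fun w : U → Fin N => ¬ ∃! S, IsoMin F w S).card = b at *
  generalize Fintype.card (U → Fin N) = C at *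
  have h1q : (g : ℚ) + b = C := by exact_mod_cast h1
  have h4q : (b : ℚ) * N ≤ Fintype.card U * C := by exact_mod_cast h4
  have h5 : (b : ℚ) / C ≤ Fintype.card U / N := by
    rw [div_le_div_iff₀ hC hNq]; exact h4q
  have h6 : (g : ℚ) / C + b / C = 1 := by
    rw [← add_div, h1q, div_self hC.ne']
  linarith
end

section
/- Let G be a finite simple graph on a nonempty vertex set V, let t ∈ ℕ, and assume that G contains a feedback vertex set of size t. Set W = 2|V| and choose a weight w(v) ∈ {1,…,W} independently and uniformly at random for each v ∈ V. Then with probability at least 1/2 there is a unique minimum-weight feedback vertex set of size t in G, i.e., a unique set S of size t among all feedback vertex sets of size t minimizing Σ_{v ∈ S} w(v). -/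
/-- A feedback vertex set of a graph: a set of vertices whose removal leaves an acyclic
graph. -/
def IsFVS {V : Type} (G : SimpleGraph V) (S : Finset V) : Prop :=
  (G.induce {v | v ∉ S}).IsAcyclic

/-- Two minimisers, one containing `v` and one avoiding it. -/
def AmbAt {V : Type} {N : ℕ} (P : Finset V → Prop) (v : V) (w : V → Fin N) : Prop :=
  ∃ S T : Finset V, P S ∧ P T ∧ v ∈ S ∧ v ∉ T ∧
    (∀ U, P U → (∑ u ∈ S, ((w u : ℕ) + 1)) ≤ ∑ u ∈ U, ((w u : ℕ) + 1)) ∧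
    (∀ U, P U → (∑ u ∈ T, ((w u : ℕ) + 1)) ≤ ∑ u ∈ U, ((w u : ℕ) + 1))

lemma ambAt_not_lt {V : Type} {N : ℕ} (P : Finset V → Prop) (v : V)
    (w w' : V → Fin N) (h : AmbAt P v w) (h' : AmbAt P v w')
    (hag : ∀ u, u ≠ v → w u = w' u) : ¬ ((w v : ℕ) < w' v) := by
  intro hlt
  obtain ⟨S, T, hS, hT, hvS, hvT, mS, mT⟩ := h
  obtain ⟨S', T', hS', hT', hvS', hvT', mS', mT'⟩ := h'
  have e1 : (∑ u ∈ T, ((w u : ℕ) + 1)) = ∑ u ∈ T, ((w' u : ℕ) + 1) :=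
    Finset.sum_congr rfl fun u hu => by
      rw [hag u (fun e => hvT (e ▸ hu))]
  have e2 : (∑ u ∈ S', ((w u : ℕ) + 1)) < ∑ u ∈ S', ((w' u : ℕ) + 1) := by
    refine Finset.sum_lt_sum (fun u _ => ?_) ⟨v, hvS', by omega⟩
    by_cases e : u = v
    · subst e; omega
    · rw [hag u e]
  have a := mS' T hT
  have b := mT S' hS'
  omega

open scoped Classical in
lemma ambAt_card {V : Type} [Fintype V] {N : ℕ} (P : Finset V → Prop) (v : V) :
    (Finset.univ.filter fun w : V → Fin N => AmbAt P v w).card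
      ≤ N ^ (Fintype.card V - 1) := by
  have hc : Fintype.card ({u : V // u ≠ v} → Fin N) = N ^ (Fintype.card V - 1) := by
    rw [Fintype.card_fun, Fintype.card_fin, Fintype.card_subtype_compl, Fintype.card_subtype_eq]
  rw [← hc, ← Finset.card_univ]
  refine Finset.card_le_card_of_injOn (fun w u => w u.1) (fun _ _ => Finset.mem_coe.2 (Finset.mem_univ _)) ?_
  intro w hw w' hw' he
  have hw := (Finset.mem_filter.1 (Finset.mem_coe.1 hw)).2
  have hw' := (Finset.mem_filter.1 (Finset.mem_coe.1 hw')).2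
  have hag : ∀ u, u ≠ v → w u = w' u := fun u hu => congrFun he ⟨u, hu⟩
  have h1 := ambAt_not_lt P v w w' hw hw' hag
  have h2 := ambAt_not_lt P v w' w hw' hw (fun u hu => (hag u hu).symm)
  funext u
  by_cases e : u = v
  · subst e; apply Fin.ext; omega
  · exact hag u e

lemma exists_ambAt {V : Type} [Fintype V] {N : ℕ} (P : Finset V → Prop) (hex : ∃ S, P S)
    (w : V → Fin N)
    (h : ¬ ∃! S : Finset V, P S ∧
      ∀ T : Finset V, P T → (∑ v ∈ S, ((w v : ℕ) + 1)) ≤ ∑ v ∈ T, ((w v : ℕ) + 1)) :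
    ∃ v, AmbAt P v w := by
  by_contra hn
  apply h
  obtain ⟨S, hS, mS⟩ := Set.exists_min_image {S | P S}
    (fun S => ∑ v ∈ S, ((w v : ℕ) + 1)) (Set.toFinite _) hex
  refine ⟨S, ⟨hS, mS⟩, ?_⟩
  rintro T ⟨hT, mT⟩
  ext u
  constructor
  · intro hu
    by_contra hu'
    exact hn ⟨u, T, S, hT, hS, hu, hu', mT, mS⟩
  · intro hu
    by_contra hu'
    exact hn ⟨u, S, T, hS, hT, hu, hu', mS, mT⟩

open scoped Classical in
/-- Let `G` be a finite simple graph on a nonempty vertex set `V`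
containing a feedback vertex set of size `t`. Choose weights `w(v) ∈ {1,…,2|V|}` (encoded
as `w : V → Fin (2|V|)` with weight `(w v).val + 1`) independently and uniformly at random.
Then with probability at least `1/2` there is a unique minimum-weight feedback vertex set
of size `t` in `G`. -/
theorem unique_min_weight_fvs {V : Type} [Fintype V] [Nonempty V] (G : SimpleGraph V)
    (t : ℕ) (hex : ∃ S : Finset V, S.card = t ∧ IsFVS G S) :
    (1 : ℚ) / 2 ≤
      ((Finset.univ.filter fun w : V → Fin (2 * Fintype.card V) =>
          ∃! S : Finset V, (S.card = t ∧ IsFVS G S) ∧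
            ∀ T : Finset V, T.card = t ∧ IsFVS G T →
              (∑ v ∈ S, ((w v : ℕ) + 1)) ≤ ∑ v ∈ T, ((w v : ℕ) + 1)).card : ℚ) /
        (Fintype.card (V → Fin (2 * Fintype.card V)) : ℚ) := by
  set n := Fintype.card V with hn
  have hnpos : 0 < n := Fintype.card_pos
  set P : Finset V → Prop := fun S => S.card = t ∧ IsFVS G S with hP
  set Q : (V → Fin (2 * n)) → Prop := fun w => ∃! S : Finset V, P S ∧
    ∀ T : Finset V, P T → (∑ v ∈ S, ((w v : ℕ) + 1)) ≤ ∑ v ∈ T, ((w v : ℕ) + 1) with hQ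
  have hbad : (Finset.univ.filter fun w => ¬ Q w).card ≤ n * (2 * n) ^ (n - 1) := by
    calc (Finset.univ.filter fun w => ¬ Q w).card
        ≤ ((Finset.univ : Finset V).biUnion fun v =>
            Finset.univ.filter fun w : V → Fin (2 * n) => AmbAt P v w).card := by
          apply Finset.card_le_card
          intro w hw
          obtain ⟨v, hv⟩ := exists_ambAt P hex w (Finset.mem_filter.1 hw).2
          exact Finset.mem_biUnion.2 ⟨v, Finset.mem_univ _,
            Finset.mem_filter.2 ⟨Finset.mem_univ _, hv⟩⟩
      _ ≤ (Finset.univ : Finset V).card * (2 * n) ^ (n - 1) :=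
          Finset.card_biUnion_le_card_mul _ _ _ fun v _ => ambAt_card P v
      _ = _ := by rw [Finset.card_univ]
  have hsum : (Finset.univ.filter fun w => Q w).card
      + (Finset.univ.filter fun w => ¬ Q w).card = (2 * n) ^ n := by
    rw [Finset.card_filter_add_card_filter_not, Finset.card_univ, Fintype.card_fun, Fintype.card_fin]
  have hpow : (2 * n) ^ n = 2 * (n * (2 * n) ^ (n - 1)) := by
    obtain ⟨m, hm⟩ : ∃ m, n = m + 1 := ⟨n - 1, by omega⟩
    rw [hm, Nat.add_sub_cancel, pow_succ]; ring
  have hcard : Fintype.card (V → Fin (2 * n)) = (2 * n) ^ n := by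
    rw [Fintype.card_fun, Fintype.card_fin]
  have hpos : 0 < (2 * n) ^ n := by positivity
  have key : (2 * n) ^ n ≤ 2 * (Finset.univ.filter fun w => Q w).card := by omega
  rw [hcard, div_le_div_iff₀ (by norm_num) (by exact_mod_cast hpos), one_mul]
  rw [mul_comm 2 (Finset.card _)] at key
  exact_mod_cast key
end

section
/- Let (F₁, B₁, φ₁) and (F₂, B₂, φ₂) be boundaried forests with the same pattern, pat(F₁, B₁, φ₁) = pat(F₂, B₂, φ₂). Then F₁ and F₂ are equivalent: for every boundaried forest (H, B, φ) with φ(B) = φ₁(B₁), the glueing of (F₁, B₁, φ₁) with (H, B, φ) is acyclic if and only if the glueing of (F₂, B₂, φ₂) with (H, B, φ) is acyclic. -/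
/-- A boundaried forest: a finite simple forest `F` with a boundary `B` inducing an
independent set, and an injective labeling `φ : B → {0,…,k}` of the boundary. -/
structure BForest (k : ℕ) where
  V : Type
  fin : Finite V
  G : SimpleGraph V
  acyc : G.IsAcyclic
  B : Set V
  indep : ∀ u ∈ B, ∀ v ∈ B, ¬ G.Adj u v
  phi : B → Fin (k + 1)
  inj : Function.Injective phi

/-- The glueing of two boundaried forests with equal boundary label sets: boundary
vertices with equal labels are identified.  Identified boundary vertices are represented
by their labels (labels outside the common image are isolated vertices, which affect
neither acyclicity nor connected components meeting the boundary); since boundaries are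
independent sets, there are no edges between boundary vertices. -/
def glueB {k : ℕ} (F₁ F₂ : BForest k) :
    SimpleGraph (Fin (k + 1) ⊕ ({v : F₁.V // v ∉ F₁.B} ⊕ {v : F₂.V // v ∉ F₂.B})) :=
  SimpleGraph.fromRel fun x y =>
    match x, y with
    | Sum.inl ℓ, Sum.inr (Sum.inl u) => ∃ b : F₁.B, F₁.phi b = ℓ ∧ F₁.G.Adj b u.1
    | Sum.inl ℓ, Sum.inr (Sum.inr u) => ∃ b : F₂.B, F₂.phi b = ℓ ∧ F₂.G.Adj b u.1
    | Sum.inr (Sum.inl u), Sum.inr (Sum.inl v) => F₁.G.Adj u.1 v.1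
    | Sum.inr (Sum.inr u), Sum.inr (Sum.inr v) => F₂.G.Adj u.1 v.1
    | _, _ => False

/-- The pattern of a boundaried forest: the set of label sets `φ(C ∩ B)` over the
connected components `C` of `F` meeting `B`. -/
def patB {k : ℕ} (F : BForest k) : Set (Set (Fin (k + 1))) :=
  {S | S.Nonempty ∧ ∃ C : F.G.ConnectedComponent,
    S = {ℓ | ∃ b : F.B, F.phi b = ℓ ∧ (b : F.V) ∈ C.supp}}

namespace GlueAux

open SimpleGraph

lemma reach_map {V W : Type*} {G : SimpleGraph V} (f : V ↪ W) {x : V} {w : W}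
    (h : (G.map f).Reachable (f x) w) : ∃ y, f y = w ∧ G.Reachable x y := by
  rw [reachable_iff_reflTransGen] at h
  induction h with
  | refl => exact ⟨x, rfl, Reachable.refl _⟩
  | tail _ hadj ih =>
    obtain ⟨y, rfl, hy⟩ := ih
    rw [map_adj] at hadj
    obtain ⟨a, b, hab, ha, rfl⟩ := hadj
    obtain rfl := f.injective ha
    exact ⟨b, rfl, hy.trans hab.reachable⟩

lemma reach_map' {V W : Type*} {G : SimpleGraph V} (f : V ↪ W) {x : V} {w : W}
    (h : (G.map f).Reachable w (f x)) : ∃ y, f y = w ∧ G.Reachable y x := by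
  obtain ⟨y, h1, h2⟩ := reach_map f h.symm
  exact ⟨y, h1, h2.symm⟩

lemma reach_map_of {V W : Type*} {G : SimpleGraph V} (f : V ↪ W) {x y : V}
    (h : G.Reachable x y) : (G.map f).Reachable (f x) (f y) :=
  h.map (Embedding.map f G).toHom

lemma acyclic_map {V W : Type*} {G : SimpleGraph V} (f : V ↪ W) (h : G.IsAcyclic) :
    (G.map f).IsAcyclic := by
  rw [isAcyclic_iff_forall_adj_isBridge] at h ⊢
  intro v w hvw
  rw [map_adj] at hvw
  obtain ⟨a, b, hab, rfl, rfl⟩ := hvw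
  have := h hab
  rw [isBridge_iff] at this ⊢
  intro hr
  apply this
  have e : (G.map f).deleteEdges {s(f a, f b)} = (G.deleteEdges {s(a, b)}).map f := by
    ext u v
    simp only [deleteEdges_adj, map_adj, Set.mem_singleton_iff]
    constructor
    · rintro ⟨⟨c, d, hcd, rfl, rfl⟩, hn⟩
      refine ⟨c, d, ⟨hcd, ?_⟩, rfl, rfl⟩
      intro h
      apply hn
      simpa using congrArg (Sym2.map f) h
    · rintro ⟨c, d, ⟨hcd, hn⟩, rfl, rfl⟩
      refine ⟨⟨c, d, hcd, rfl, rfl⟩, ?_⟩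
      intro h
      apply hn
      apply Sym2.map.injective f.injective
      simpa using h
  rw [e] at hr
  obtain ⟨y, hy, hr⟩ := reach_map f hr
  obtain rfl := f.injective hy
  exact hr

lemma reach_sup {U W : Type*} (A : SimpleGraph W) (f : U ↪ W) (H : SimpleGraph U) (x y : U) :
    (A ⊔ H.map f).Reachable (f x) (f y) ↔
      Relation.ReflTransGen (fun x y => A.Reachable (f x) (f y) ∨ H.Adj x y) x y := by
  constructor
  · intro h
    suffices H : ∀ w, (A ⊔ H.map f).Reachable (f x) w → ∃ z,
        Relation.ReflTransGen (fun x y => A.Reachable (f x) (f y) ∨ H.Adj x y) x z ∧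
        A.Reachable (f z) w by
      obtain ⟨z, h1, h2⟩ := H _ h
      exact h1.tail (Or.inl h2)
    intro w h
    rw [reachable_iff_reflTransGen] at h
    induction h with
    | refl => exact ⟨x, .refl, Reachable.refl _⟩
    | tail _ hadj ih =>
      obtain ⟨z, hz, hr⟩ := ih
      rw [sup_adj, map_adj] at hadj
      rcases hadj with hadj | ⟨a, b, hab, rfl, rfl⟩
      · exact ⟨z, hz, hr.trans hadj.reachable⟩
      · exact ⟨b, (hz.tail (Or.inl hr)).tail (Or.inr hab), Reachable.refl _⟩
  · intro h
    induction h with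
    | refl => exact Reachable.refl _
    | tail _ hs ih =>
      refine ih.trans ?_
      rcases hs with hs | hs
      · exact hs.mono le_sup_left
      · refine Adj.reachable ?_
        rw [sup_adj, map_adj]
        exact Or.inr ⟨_, _, hs, rfl, rfl⟩

lemma key {U W : Type*} [DecidableEq U] (S : Finset (Sym2 U)) (u v : U) (A : SimpleGraph W)
    (f : U ↪ W) :
    A ⊔ (fromEdgeSet ((insert s(u, v) S : Finset (Sym2 U)) : Set (Sym2 U))).map f
      = (A ⊔ (fromEdgeSet (S : Set (Sym2 U))).map f) ⊔ edge (f u) (f v) := by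
  rw [sup_assoc]
  congr 1
  ext x y
  simp only [sup_adj, map_adj, fromEdgeSet_adj, edge_adj, Finset.coe_insert, Set.mem_insert_iff,
    Sym2.eq_iff]
  constructor
  · rintro ⟨a, b, ⟨(h | h), hne⟩, rfl, rfl⟩
    · right
      have : f a ≠ f b := fun e => hne (f.injective e)
      rcases h with ⟨rfl, rfl⟩ | ⟨rfl, rfl⟩ <;> simp [this]
    · exact Or.inl ⟨a, b, ⟨h, hne⟩, rfl, rfl⟩
  · rintro (⟨a, b, ⟨h, hne⟩, rfl, rfl⟩ | ⟨⟨rfl, rfl⟩ | ⟨rfl, rfl⟩, hne⟩)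
    · exact ⟨a, b, ⟨Or.inr h, hne⟩, rfl, rfl⟩
    · exact ⟨u, v, ⟨Or.inl (by simp), fun e => hne (by rw [e])⟩, rfl, rfl⟩
    · exact ⟨v, u, ⟨Or.inl (by simp), fun e => hne (by rw [e])⟩, rfl, rfl⟩

lemma key' {U W : Type*} (S : Finset (Sym2 U)) (u v : U) (A : SimpleGraph W)
    (f : U ↪ W) (hA : ¬ A.Adj (f u) (f v)) (he : s(u, v) ∉ S) :
    ¬ (A ⊔ (fromEdgeSet (S : Set (Sym2 U))).map f).Adj (f u) (f v) := by
  rw [sup_adj, map_adj]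
  rintro (h | ⟨a, b, h, ha, hb⟩)
  · exact hA h
  · obtain rfl := f.injective ha
    obtain rfl := f.injective hb
    rw [fromEdgeSet_adj] at h
    exact he (by simpa using h.1)

lemma main {U W₁ W₂ : Type*} (A₁ : SimpleGraph W₁) (A₂ : SimpleGraph W₂)
    (f₁ : U ↪ W₁) (f₂ : U ↪ W₂) (h₁ : A₁.IsAcyclic) (h₂ : A₂.IsAcyclic)
    (hr : ∀ x y, A₁.Reachable (f₁ x) (f₁ y) ↔ A₂.Reachable (f₂ x) (f₂ y))
    (S : Finset (Sym2 U))
    (hS₁ : ∀ x y, s(x, y) ∈ S → ¬ A₁.Adj (f₁ x) (f₁ y))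
    (hS₂ : ∀ x y, s(x, y) ∈ S → ¬ A₂.Adj (f₂ x) (f₂ y)) :
    (A₁ ⊔ (fromEdgeSet (S : Set (Sym2 U))).map f₁).IsAcyclic ↔
      (A₂ ⊔ (fromEdgeSet (S : Set (Sym2 U))).map f₂).IsAcyclic := by
  classical
  induction S using Finset.induction_on with
  | empty =>
    have e : ∀ {W : Type _} (f : U ↪ W), (⊥ : SimpleGraph U).map f = ⊥ := by
      intro W f
      ext x y
      rw [map_adj]
      simp
    have e' : ∀ {W : Type _} (f : U ↪ W), (⊥ : SimpleGraph U).map f = ⊥ := by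
      intro W f
      ext x y
      rw [map_adj]
      simp
    rw [Finset.coe_empty, fromEdgeSet_empty, e, e', sup_bot_eq, sup_bot_eq]
    exact iff_of_true h₁ h₂
  | insert e S he ih =>
    induction e using Sym2.ind with
    | _ u v =>
    have ih := ih (fun x y h => hS₁ x y (Finset.mem_insert_of_mem h))
      (fun x y h => hS₂ x y (Finset.mem_insert_of_mem h))
    rw [key, key, isAcyclic_sup_fromEdgeSet_iff, isAcyclic_sup_fromEdgeSet_iff, ih,
      reach_sup, reach_sup]
    have k1 := key' S u v A₁ f₁ (hS₁ u v (Finset.mem_insert_self _ _)) he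
    have k2 := key' S u v A₂ f₂ (hS₂ u v (Finset.mem_insert_self _ _)) he
    simp only [k1, k2, hr, f₁.injective.eq_iff, f₂.injective.eq_iff]

variable {k : ℕ}

open Classical in
/-- embedding of the vertices of `F` into the glueing vertex set -/
noncomputable def lab (F : BForest k) : F.V ↪ Fin (k + 1) ⊕ {v : F.V // v ∉ F.B} where
  toFun := fun v => if h : v ∈ F.B then Sum.inl (F.phi ⟨v, h⟩) else Sum.inr ⟨v, h⟩
  inj' := by
    intro a b h
    by_cases ha : a ∈ F.B <;> by_cases hb : b ∈ F.B <;> simp [ha, hb] at h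
    · simpa using F.inj h
    · exact h

lemma lab_apply_pos (F : BForest k) (v : F.V) (h : v ∈ F.B) :
    lab F v = Sum.inl (F.phi ⟨v, h⟩) := dif_pos h

lemma lab_apply_neg (F : BForest k) (v : F.V) (h : v ∉ F.B) :
    lab F v = Sum.inr ⟨v, h⟩ := dif_neg h

lemma lab_mem (F : BForest k) (b : F.B) : lab F b = Sum.inl (F.phi b) :=
  lab_apply_pos F b b.2

lemma lab_inl (F : BForest k) (v : F.V) (l) : lab F v = Sum.inl l ↔
    ∃ b : F.B, F.phi b = l ∧ b = v := by
  constructor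
  · intro hl
    by_cases h : v ∈ F.B
    · rw [lab_apply_pos F v h] at hl
      exact ⟨⟨v, h⟩, Sum.inl_injective hl, rfl⟩
    · rw [lab_apply_neg F v h] at hl
      cases hl
  · rintro ⟨b, rfl, rfl⟩
    exact lab_mem F b

lemma lab_inr (F : BForest k) (v : F.V) (w) : lab F v = Sum.inr w ↔ v = w.1 := by
  constructor
  · intro hl
    by_cases h : v ∈ F.B
    · rw [lab_apply_pos F v h] at hl
      cases hl
    · rw [lab_apply_neg F v h] at hl
      cases hl
      rfl
  · rintro rfl
    exact lab_apply_neg F _ w.2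

/-- left injection -/
def i₁ (A B C : Type) : A ⊕ B ↪ A ⊕ (B ⊕ C) where
  toFun := Sum.map id Sum.inl
  inj' := Sum.map_injective.2 ⟨Function.injective_id, Sum.inl_injective⟩

/-- right injection -/
def i₂ (A B C : Type) : A ⊕ C ↪ A ⊕ (B ⊕ C) where
  toFun := Sum.map id Sum.inr
  inj' := Sum.map_injective.2 ⟨Function.injective_id, Sum.inr_injective⟩

lemma labAdj (F : BForest k) (x y) : (F.G.map (lab F)).Adj x y ↔
    match x, y with
    | Sum.inl _, Sum.inl _ => False
    | Sum.inl l, Sum.inr u => ∃ b : F.B, F.phi b = l ∧ F.G.Adj b u.1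
    | Sum.inr u, Sum.inl l => ∃ b : F.B, F.phi b = l ∧ F.G.Adj b u.1
    | Sum.inr u, Sum.inr v => F.G.Adj u.1 v.1 := by
  rw [map_adj]
  rcases x with l | u <;> rcases y with m | v <;> simp only [lab_inl, lab_inr]
  · simp only [iff_false]
    rintro ⟨_, _, h, ⟨b, _, rfl⟩, ⟨c, _, rfl⟩⟩
    exact F.indep _ b.2 _ c.2 h
  · constructor
    · rintro ⟨_, _, h, ⟨b, hb, rfl⟩, rfl⟩
      exact ⟨b, hb, h⟩
    · rintro ⟨b, hb, h⟩
      exact ⟨_, _, h, ⟨b, hb, rfl⟩, rfl⟩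
  · constructor
    · rintro ⟨_, _, h, rfl, ⟨b, hb, rfl⟩⟩
      exact ⟨b, hb, h.symm⟩
    · rintro ⟨b, hb, h⟩
      exact ⟨_, _, h.symm, rfl, ⟨b, hb, rfl⟩⟩
  · constructor
    · rintro ⟨_, _, h, rfl, rfl⟩
      exact h
    · exact fun h => ⟨_, _, h, rfl, rfl⟩

lemma glue_eq (F H : BForest k) : glueB F H =
    (F.G.map (lab F)).map (i₁ _ _ _) ⊔ (H.G.map (lab H)).map (i₂ _ _ _) := by
  ext x y
  rw [sup_adj, map_adj, map_adj]
  rcases x with l | u | u <;> rcases y with m | v | v <;>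
    simp [glueB, labAdj, i₁, i₂, -map_adj, SimpleGraph.adj_comm]
  all_goals
    rintro h rfl
    exact h.ne rfl


lemma reach_pat (F : BForest k) (C : Type) (x y : Fin (k+1) ⊕ C) :
    ((F.G.map (lab F)).map (i₁ _ _ C)).Reachable (i₂ _ _ _ x) (i₂ _ _ _ y) ↔
    x = y ∨ ∃ l m, x = Sum.inl l ∧ y = Sum.inl m ∧ ∃ S ∈ patB F, l ∈ S ∧ m ∈ S := by
  constructor
  · intro h
    by_cases hxy : x = y
    · exact Or.inl hxy
    right
    have hne : i₂ (Fin (k+1)) {v : F.V // v ∉ F.B} C x ≠ i₂ _ _ _ y :=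
      fun e => hxy ((i₂ _ _ _).injective e)
    have ex : ∃ v, i₁ _ _ C (lab F v) = i₂ _ _ _ x := by
      obtain ⟨w, hw⟩ := h.nonempty_neighborSet_left hne
      simp only [mem_neighborSet, map_adj] at hw
      obtain ⟨_, _, ⟨a, b, _, rfl, rfl⟩, e, _⟩ := hw
      exact ⟨a, e⟩
    obtain ⟨v, hv⟩ := ex
    rw [← hv] at h
    obtain ⟨z, hz, h⟩ := reach_map _ h
    obtain ⟨w, rfl, h'⟩ := reach_map _ h
    rcases x with l | c
    swap
    · rcases hl : lab F v with a | a <;> simp [hl, i₁, i₂] at hv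
    rcases y with m | c
    swap
    · rcases hl : lab F w with a | a <;> simp [hl, i₁, i₂] at hz
    refine ⟨l, m, rfl, rfl, ?_⟩
    have hl : lab F v = Sum.inl l := by
      rcases hl : lab F v with a | a <;> simp [hl, i₁, i₂] at hv ⊢
      exact hv
    have hm : lab F w = Sum.inl m := by
      rcases hl : lab F w with a | a <;> simp [hl, i₁, i₂] at hz ⊢
      exact hz
    rw [lab_inl] at hl hm
    obtain ⟨b, rfl, rfl⟩ := hl
    obtain ⟨c, rfl, rfl⟩ := hm
    have h1 : F.phi b ∈ {ℓ | ∃ b' : F.B, F.phi b' = ℓ ∧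
      (b' : F.V) ∈ (F.G.connectedComponentMk b).supp} := ⟨b, rfl, rfl⟩
    refine ⟨_, ⟨⟨_, h1⟩, _, rfl⟩, h1, ⟨c, rfl, ?_⟩⟩
    exact ConnectedComponent.sound h'.symm
  · rintro (rfl | ⟨l, m, rfl, rfl, S, ⟨_, K, rfl⟩, ⟨b, rfl, hb⟩, ⟨c, rfl, hc⟩⟩)
    · exact Reachable.refl _
    · have : F.G.Reachable b c := ConnectedComponent.exact (hb.trans hc.symm)
      have := reach_map_of (i₁ _ _ C) (reach_map_of (lab F) this)
      rwa [lab_mem, lab_mem] at this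

end GlueAux

/-- Boundaried forests with the same pattern are equivalent: for every
boundaried forest `H` whose boundary has the same label set, gluing with `F₁` gives an
acyclic graph iff gluing with `F₂` does. -/
theorem equiv_of_same_pattern {k : ℕ} (F₁ F₂ : BForest k)
    (hpat : patB F₁ = patB F₂) :
    ∀ H : BForest k, Set.range H.phi = Set.range F₁.phi →
      ((glueB F₁ H).IsAcyclic ↔ (glueB F₂ H).IsAcyclic) := by
  intro H _
  classical
  have := H.fin
  rw [GlueAux.glue_eq, GlueAux.glue_eq]
  have hfin : (H.G.map (GlueAux.lab H)).edgeSet.Finite := Set.toFinite _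
  have e : SimpleGraph.fromEdgeSet (hfin.toFinset : Set (Sym2 _)) = H.G.map (GlueAux.lab H) := by
    rw [Set.Finite.coe_toFinset, SimpleGraph.fromEdgeSet_edgeSet]
  have hS : ∀ F : BForest k, ∀ x y, s(x, y) ∈ hfin.toFinset →
      ¬ ((F.G.map (GlueAux.lab F)).map (GlueAux.i₁ _ _ _)).Adj
        (GlueAux.i₂ _ _ _ x) (GlueAux.i₂ _ _ _ y) := by
    intro F x y hxy hA
    rw [Set.Finite.mem_toFinset, SimpleGraph.mem_edgeSet, GlueAux.labAdj] at hxy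
    rw [SimpleGraph.map_adj] at hA
    obtain ⟨a, b, hab, ha, hb⟩ := hA
    rcases x with x | x <;> rcases y with y | y <;> rcases a with a | a <;>
      rcases b with b | b <;> simp [GlueAux.i₁, GlueAux.i₂] at ha hb hxy
  have := GlueAux.main
    ((F₁.G.map (GlueAux.lab F₁)).map (GlueAux.i₁ _ _ {v : H.V // v ∉ H.B}))
    ((F₂.G.map (GlueAux.lab F₂)).map (GlueAux.i₁ _ _ {v : H.V // v ∉ H.B}))
    (GlueAux.i₂ _ _ _) (GlueAux.i₂ _ _ _)
    (GlueAux.acyclic_map _ (GlueAux.acyclic_map _ F₁.acyc))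
    (GlueAux.acyclic_map _ (GlueAux.acyclic_map _ F₂.acyc))
    (fun x y => by rw [GlueAux.reach_pat, GlueAux.reach_pat, hpat])
    hfin.toFinset (hS F₁) (hS F₂)
  rwa [e] at this
end
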